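/- Let G be a connected cubic graph (every vertex has degree exactly 3) that is traceable, i.e., G contains a Hamiltonian path. Then the edge set of G can be decomposed into a spanning tree of G, a matching, and a family of at most two vertex-disjoint cycles. -/

import Mathlib

/-! Let `D` be a set of vertices inducing disjoint cycles, at most two of them, and `F` a tree on
the vertices outside `D`. Adding to `F` the third edge of each vertex of `D` gives a spanning
tree. If every vertex outside `D` has two edges in it, then the edges which are neither in the
spanning tree nor on the cycles form a matching. We take for `F` the segments of the Hamiltonian
path outside `D`, joined by chords; only the two ends of the path can then violate the degree
condition.

A chord with no other chord between its ends closes an induced cycle with the path. Suppose that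
the middle part of the path contains an end of a chord from each end of the path, and that the
parts to the left and to the right of it both contain chords. If no edge joins a cycle on the left
to one on the right, these two cycles serve as `D`. Otherwise a single edge `xy` joins the left
part to the right part, because two such edges, chosen innermost, would lie on one induced cycle
serving as `D`; and all chords inside either part pass over its end of `xy`.

If two chords `0b` and `nc` at the ends of the path cross, they form with the path a subdivision
of a theta graph, whose three sides are interchangeable. Two of the sides agree on whether they
have chords, and we may assume that these are `[0, c)` and `(b, n]`. If no two cycles serve as
`D`, a cycle `0, …, x, y, …, b` does. Here `xy` is the single edge between the two sides if they
have chords; if they do not, it is an edge between them with `x + y` minimal, or `cn` if there is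
none.

Otherwise the chords `0a`, `0b` and `nc`, `nd` satisfy `a < b < c < d`, and we may assume that a
single edge `xy` joins `[0, b)` to `(c, n]`. Reversing the segment `[0, a)` moves `x` to
`a - 1 - x`, so we may also assume `x ≤ a - 1 - x`. The chords at the vertices in `(x, a)` cannot
then all end in `(0, x)`, so one of them ends in the middle part. The chord at `a - 1` ends at some
`z < x`, and the cycle `0, …, z, a - 1, a` with a cycle on the right serves as `D`: the rest of the
left part stays attached to the middle. -/

namespace HoffmannOstenhof

open SimpleGraph

variable {V : Type*} {G : SimpleGraph V}

section Cubic

variable [G.LocallyFinite]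

theorem exists_adj_ne_ne (hG : G.IsRegularOfDegree 3) (v a b : V) :
    ∃ c, G.Adj v c ∧ c ≠ a ∧ c ≠ b := by
  classical
  have h : ¬ G.neighborFinset v ⊆ {a, b} := fun h => by
    have := (Finset.card_le_card h).trans Finset.card_le_two
    rw [card_neighborFinset_eq_degree, hG v] at this
    omega
  simpa [Finset.not_subset] using h

theorem eq_or_eq_or_eq_of_adj (hG : G.IsRegularOfDegree 3) {v a b c d : V}
    (ha : G.Adj v a) (hb : G.Adj v b) (hc : G.Adj v c) (hd : G.Adj v d)
    (hab : a ≠ b) (hac : a ≠ c) (hbc : b ≠ c) : d = a ∨ d = b ∨ d = c := by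
  classical
  have h : {a, b, c} = G.neighborFinset v := by
    refine Finset.eq_of_subset_of_card_le (fun x hx => ?_) ?_
    · simp only [Finset.mem_insert, Finset.mem_singleton] at hx
      rcases hx with rfl | rfl | rfl <;> simpa
    · rw [card_neighborFinset_eq_degree, hG v, Finset.card_eq_three.2 ⟨a, b, c, hab, hac, hbc, rfl⟩]
  have hd := (G.mem_neighborFinset v d).2 hd
  rw [← h] at hd
  simpa using hd

end Cubic

section Tree

theorem isTree_coe_iff {F : G.Subgraph} (hF : F.verts.Finite) :
    F.coe.IsTree ↔ F.Connected ∧ F.edgeSet.ncard + 1 = F.verts.ncard := by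
  have : Finite F.verts := hF
  rw [isTree_iff_connected_and_card, F.connected_iff', ← F.image_coe_edgeSet_coe,
    Set.ncard_image_of_injective _ (Sym2.map.injective Subtype.val_injective)]
  rfl

theorem isTree_coe_toSubgraph {u v : V} {p : G.Walk u v} (hp : p.IsPath) :
    p.toSubgraph.coe.IsTree := by
  classical
  have hverts : p.toSubgraph.verts = (p.support.toFinset : Set V) := by
    ext; simp
  have hedges : p.toSubgraph.edgeSet = (p.edges.toFinset : Set (Sym2 V)) := by
    ext; simp
  rw [isTree_coe_iff (hverts ▸ Finset.finite_toSet _), hverts, hedges, Set.ncard_coe_finset,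
    Set.ncard_coe_finset, List.toFinset_card_of_nodup hp.support_nodup,
    List.toFinset_card_of_nodup hp.isTrail.edges_nodup, p.length_edges, p.length_support]
  exact ⟨p.toSubgraph_connected, rfl⟩

theorem isTree_coe_sup_subgraphOfAdj {F H : G.Subgraph} (hF : F.coe.IsTree) (hH : H.coe.IsTree)
    (hFfin : F.verts.Finite) (hHfin : H.verts.Finite) (hdisj : Disjoint F.verts H.verts)
    {u w : V} (hu : u ∈ F.verts) (hw : w ∈ H.verts) (huw : G.Adj u w) :
    (F ⊔ H ⊔ G.subgraphOfAdj huw).coe.IsTree := by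
  have hverts : (F ⊔ H ⊔ G.subgraphOfAdj huw).verts = F.verts ∪ H.verts := by
    rw [Subgraph.verts_sup, Subgraph.verts_sup, subgraphOfAdj_verts]
    exact Set.union_eq_left.2 (Set.insert_subset (.inl hu) (Set.singleton_subset_iff.2 (.inr hw)))
  have hfin : (F ⊔ H ⊔ G.subgraphOfAdj huw).verts.Finite := hverts ▸ hFfin.union hHfin
  obtain ⟨hFc, hFcard⟩ := (isTree_coe_iff hFfin).1 hF
  obtain ⟨hHc, hHcard⟩ := (isTree_coe_iff hHfin).1 hH
  have hconn : (F ⊔ H ⊔ G.subgraphOfAdj huw).Connected := by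
    rw [sup_assoc, sup_comm H]
    refine Subgraph.connected_sup hFc.preconnected (Subgraph.connected_sup
      (Subgraph.subgraphOfAdj_connected huw).preconnected hHc.preconnected ?_).preconnected ?_
    · exact ⟨w, by simp, hw⟩
    · exact ⟨u, hu, by simp⟩
  have hcard : (F ⊔ H ⊔ G.subgraphOfAdj huw).edgeSet.ncard + 1 ≤ F.verts.ncard + H.verts.ncard := by
    rw [Subgraph.edgeSet_sup, Subgraph.edgeSet_sup, edgeSet_subgraphOfAdj]
    have h₁ := Set.ncard_union_le (F.edgeSet ∪ H.edgeSet) {s(u, w)}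
    have h₂ := Set.ncard_union_le F.edgeSet H.edgeSet
    rw [Set.ncard_singleton] at h₁
    omega
  refine (isTree_coe_iff hfin).2 ⟨hconn, le_antisymm ?_ ?_⟩
  · rwa [hverts, Set.ncard_union_eq hdisj hFfin hHfin]
  · have h := (Subgraph.connected_iff'.1 hconn).card_vert_le_card_edgeSet_add_one
    rwa [← Subgraph.image_coe_edgeSet_coe,
      Set.ncard_image_of_injective _ (Sym2.map.injective Subtype.val_injective)]

theorem isTree_fromEdgeSet_union_image [Finite V] {F : G.Subgraph} (hF : F.coe.IsTree) {g : V → V}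
    (hg : ∀ v ∉ F.verts, g v ∈ F.verts) :
    (fromEdgeSet (F.edgeSet ∪ (fun v => s(v, g v)) '' F.vertsᶜ)).IsTree := by
  set T := fromEdgeSet (F.edgeSet ∪ (fun v => s(v, g v)) '' F.vertsᶜ)
  obtain ⟨hFc, hFcard⟩ := (isTree_coe_iff F.verts.toFinite).1 hF
  let f : F.coe →g T := ⟨Subtype.val, fun {a b} h => (fromEdgeSet_adj _).2
    ⟨Or.inl h, (F.adj_sub h).ne⟩⟩
  have hin (a b : V) (ha : a ∈ F.verts) (hb : b ∈ F.verts) : T.Reachable a b :=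
    (hFc.preconnected ⟨a, ha⟩ ⟨b, hb⟩).map f
  have hto (v : V) : ∃ a ∈ F.verts, T.Reachable v a := by
    by_cases hv : v ∈ F.verts
    · exact ⟨v, hv, .refl v⟩
    · have hne : v ≠ g v := fun h => hv (h ▸ hg v hv)
      exact ⟨g v, hg v hv,
        ((fromEdgeSet_adj _).2 ⟨Or.inr (Set.mem_image_of_mem _ hv), hne⟩ : T.Adj v (g v)).reachable⟩
  obtain ⟨r, hr⟩ := hFc.nonempty
  have hconn : T.Connected := by
    refine (connected_iff_exists_forall_reachable T).2 ⟨r, fun v => ?_⟩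
    obtain ⟨a, ha, hva⟩ := hto v
    exact (hin r a hr ha).trans hva.symm
  refine isTree_iff_connected_and_card.2
    ⟨hconn, le_antisymm ?_ hconn.card_vert_le_card_edgeSet_add_one⟩
  have hedges : T.edgeSet ⊆ F.edgeSet ∪ (fun v => s(v, g v)) '' F.vertsᶜ := by
    rw [edgeSet_fromEdgeSet]; exact Set.sdiff_subset
  have h₁ := (Set.ncard_le_ncard hedges).trans (Set.ncard_union_le _ _)
  have h₂ := Set.ncard_image_le (f := fun v => s(v, g v)) F.vertsᶜ.toFinite
  have h₃ := Set.ncard_add_ncard_compl F.verts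
  change T.edgeSet.ncard + 1 ≤ _
  omega

end Tree

/-- The edge set of `G` is partitioned into a spanning tree, a matching and at most `k`
vertex-disjoint cycles. -/
def HasDecomposition (G : SimpleGraph V) (k : ℕ) : Prop :=
  ∃ T M C : Set (Sym2 V),
    T ∪ M ∪ C = G.edgeSet ∧ Disjoint T M ∧ Disjoint T C ∧ Disjoint M C ∧
    (fromEdgeSet T).IsTree ∧
    M.Pairwise (fun e f => ∀ v : V, v ∈ e → v ∉ f) ∧
    ∃ (ι : Type) (_ : Fintype ι) (x : ι → V) (w : ∀ i, G.Walk (x i) (x i)),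
      Fintype.card ι ≤ k ∧ (∀ i, (w i).IsCycle) ∧
      (Pairwise fun i j => ∀ v : V, v ∈ (w i).support → v ∉ (w j).support) ∧
      C = ⋃ i, {e | e ∈ (w i).edges}

theorem HasDecomposition.mono {k l : ℕ} (h : HasDecomposition G k) (hkl : k ≤ l) :
    HasDecomposition G l := by
  obtain ⟨T, M, C, hTMC, hTM, hTC, hMC, hT, hM, ι, hι, x, w, hk, hw⟩ := h
  exact ⟨T, M, C, hTMC, hTM, hTC, hMC, hT, hM, ι, hι, x, w, hk.trans hkl, hw⟩

/-- The subgraph of `G` induced by `D` is a disjoint union of at most `k` cycles: every edge of `G`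
inside `D` is an edge of one of the cycles. -/
def IsInducedCyclePacking (G : SimpleGraph V) (k : ℕ) (D : Set V) : Prop :=
  ∃ (ι : Type) (_ : Fintype ι) (x : ι → V) (w : ∀ i, G.Walk (x i) (x i)),
    Fintype.card ι ≤ k ∧ (∀ i, (w i).IsCycle) ∧
    (Pairwise fun i j => ∀ v : V, v ∈ (w i).support → v ∉ (w j).support) ∧
    (∀ v, v ∈ D ↔ ∃ i, v ∈ (w i).support) ∧
    ∀ ⦃a⦄, a ∈ D → ∀ ⦃b⦄, b ∈ D → G.Adj a b → ∃ i, s(a, b) ∈ (w i).edges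

namespace IsInducedCyclePacking

variable {k l : ℕ} {D E : Set V}

theorem union (hD : IsInducedCyclePacking G k D) (hE : IsInducedCyclePacking G l E)
    (hDE : Disjoint D E) (hadj : ∀ a ∈ D, ∀ b ∈ E, ¬ G.Adj a b) :
    IsInducedCyclePacking G (k + l) (D ∪ E) := by
  obtain ⟨ι, _, x, w, hk, hcyc, hdisj, hsupp, hind⟩ := hD
  obtain ⟨κ, _, y, z, hl, hcyc', hdisj', hsupp', hind'⟩ := hE
  have hwz (i j v) (hv : v ∈ (w i).support) (hv' : v ∈ (z j).support) : False :=
    Set.disjoint_left.1 hDE ((hsupp v).2 ⟨i, hv⟩) ((hsupp' v).2 ⟨j, hv'⟩)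
  refine ⟨ι ⊕ κ, inferInstance, Sum.elim x y, Sum.rec w z, ?_, ?_, ?_, fun v => ?_, ?_⟩
  · rw [Fintype.card_sum]
    exact add_le_add hk hl
  · rintro (i | j)
    exacts [hcyc i, hcyc' j]
  · rintro (i | i) (j | j) hij v hv hv'
    exacts [hdisj (by simpa using hij) v hv hv', hwz i j v hv hv', hwz j i v hv' hv,
      hdisj' (by simpa using hij) v hv hv']
  · rw [Set.mem_union, hsupp, hsupp']
    refine ⟨?_, ?_⟩
    · rintro (⟨i, hi⟩ | ⟨j, hj⟩)
      exacts [⟨.inl i, hi⟩, ⟨.inr j, hj⟩]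
    · rintro ⟨i | j, h⟩
      exacts [.inl ⟨i, h⟩, .inr ⟨j, h⟩]
  · rintro a (ha | ha) b (hb | hb) hab
    · exact (hind ha hb hab).imp' Sum.inl fun _ => id
    · exact absurd hab (hadj a ha b hb)
    · exact absurd hab.symm (hadj b hb a ha)
    · exact (hind' ha hb hab).imp' Sum.inr fun _ => id

theorem of_paths {a b c d : V} {p : G.Walk a b} {q : G.Walk c d} (hp : p.IsPath) (hq : q.IsPath)
    (hp' : p.IsChordless) (hq' : q.IsChordless) (hbc : G.Adj b c) (hda : G.Adj d a)
    (hne : a ≠ b ∨ c ≠ d) (hdisj : p.support.Disjoint q.support)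
    (hcross : ∀ u ∈ p.support, ∀ v ∈ q.support, G.Adj u v → u = b ∧ v = c ∨ u = a ∧ v = d) :
    IsInducedCyclePacking G 1 {v | v ∈ p.support ∨ v ∈ q.support} := by
  have hcyc : ((Walk.cons hda p).append (.cons hbc q)).IsCycle := by
    refine Walk.IsPath.isCycle_append (hp.cons fun h => hdisj h q.end_mem_support)
      (hq.cons fun h => hdisj p.end_mem_support h) (by simpa using hdisj) ?_
    simp only [Walk.length_cons, Nat.lt_add_left_iff_pos, Nat.pos_iff_ne_zero]
    exact hne.imp (fun h h₀ => h (Walk.eq_of_length_eq_zero h₀))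
      (fun h h₀ => h (Walk.eq_of_length_eq_zero h₀))
  refine ⟨Unit, inferInstance, fun _ => d, fun _ => _, le_rfl, fun _ => hcyc,
    fun i j hij => absurd (Subsingleton.elim i j) hij, fun v => ?_, ?_⟩
  · simp only [Walk.mem_support_append_iff, Walk.support_cons, List.mem_cons, Set.mem_ofPred_eq,
      exists_const]
    have := p.end_mem_support
    have := q.end_mem_support
    grind
  · intro u hu v hv huv
    simp only [Walk.edges_append, Walk.edges_cons, List.mem_append, List.mem_cons, exists_const]
    rcases hu with hu | hu <;> rcases hv with hv | hv
    · exact .inl (.inr (hp'.mem_edges hu hv huv))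
    · rcases hcross u hu v hv huv with ⟨rfl, rfl⟩ | ⟨rfl, rfl⟩ <;> simp
    · rcases hcross v hv u hu huv.symm with ⟨rfl, rfl⟩ | ⟨rfl, rfl⟩ <;> simp
    · exact .inr (.inr (hq'.mem_edges hu hv huv))

variable [G.LocallyFinite]

theorem existsUnique_adj_notMem (hG : G.IsRegularOfDegree 3)
    (hD : IsInducedCyclePacking G k D) {v : V} (hv : v ∈ D) : ∃! u, G.Adj v u ∧ u ∉ D := by
  obtain ⟨ι, _, x, w, -, hcyc, hdisj, hsupp, hind⟩ := hD
  obtain ⟨i, hi⟩ := (hsupp v).1 hv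
  obtain ⟨a, b, hab, hset⟩ := Set.ncard_eq_two.1 ((hcyc i).ncard_neighborSet_toSubgraph_eq_two hi)
  have hadj (u) (hu : u = a ∨ u = b) : G.Adj v u ∧ u ∈ D := by
    have hu : (w i).toSubgraph.Adj v u := by
      rwa [← Subgraph.mem_neighborSet, hset]
    exact ⟨hu.adj_sub, (hsupp u).2 ⟨i, (w i).mem_verts_toSubgraph.1 hu.snd_mem⟩⟩
  have hmem (u) (hvu : G.Adj v u) (hu : u ∈ D) : u = a ∨ u = b := by
    obtain ⟨j, hj⟩ := hind hv hu hvu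
    obtain rfl : i = j := by
      by_contra hij
      exact hdisj hij v hi ((w j).fst_mem_support_of_mem_edges hj)
    change u ∈ ({a, b} : Set V)
    rwa [← hset, Subgraph.mem_neighborSet, Walk.adj_toSubgraph_iff_mem_edges]
  obtain ⟨c, hvc, hca, hcb⟩ := exists_adj_ne_ne hG v a b
  have hc : c ∉ D := fun h => (hmem c hvc h).elim hca hcb
  refine ⟨c, ⟨hvc, hc⟩, fun u ⟨hvu, hu⟩ => ?_⟩
  rcases eq_or_eq_or_eq_of_adj hG (hadj a (.inl rfl)).1 (hadj b (.inr rfl)).1 hvc hvu hab hca.symm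
    hcb.symm with rfl | rfl | h
  exacts [absurd (hadj u (.inl rfl)).2 hu, absurd (hadj u (.inr rfl)).2 hu, h]

theorem hasDecomposition (hG : G.IsRegularOfDegree 3) (hD : IsInducedCyclePacking G k D)
    {T : Set (Sym2 V)} (hTG : T ⊆ G.edgeSet) (hT : (fromEdgeSet T).IsTree)
    (hTD : ∀ ⦃a b⦄, s(a, b) ∈ T → a ∈ D → b ∉ D)
    (hDT : ∀ ⦃v⦄, v ∈ D → ∀ ⦃u⦄, u ∉ D → G.Adj v u → s(v, u) ∈ T)
    (hdeg : ∀ v ∉ D, ∃ a b, a ≠ b ∧ s(v, a) ∈ T ∧ s(v, b) ∈ T) : HasDecomposition G k := by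
  obtain ⟨ι, _, x, w, hk, hcyc, hdisj, hsupp, hind⟩ := hD
  set C : Set (Sym2 V) := ⋃ i, {e | e ∈ (w i).edges} with hC
  have hmemC {a b} : s(a, b) ∈ C ↔ G.Adj a b ∧ a ∈ D ∧ b ∈ D := by
    simp only [hC, Set.mem_iUnion, Set.mem_ofPred_eq]
    refine ⟨fun ⟨i, hi⟩ => ⟨(w i).adj_of_mem_edges hi, ?_, ?_⟩, fun ⟨h, ha, hb⟩ => hind ha hb h⟩
    · exact (hsupp a).2 ⟨i, (w i).fst_mem_support_of_mem_edges hi⟩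
    · exact (hsupp b).2 ⟨i, (w i).snd_mem_support_of_mem_edges hi⟩
  have hCG : C ⊆ G.edgeSet := Sym2.ind fun a b h => (hmemC.1 h).1
  refine ⟨T, G.edgeSet \ (T ∪ C), C, ?_, ?_, ?_, ?_, hT, ?_, ι, _, x, w, hk, hcyc, hdisj, rfl⟩
  · rw [Set.union_right_comm, Set.union_sdiff_cancel (Set.union_subset hTG hCG)]
  · exact Set.disjoint_sdiff_right.mono_left Set.subset_union_left
  · exact Set.disjoint_left.2 (Sym2.ind fun a b h h' => hTD h (hmemC.1 h').2.1 (hmemC.1 h').2.2)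
  · exact Set.disjoint_sdiff_left.mono_right Set.subset_union_right
  · rintro e ⟨he, heTC⟩ f ⟨hf, hfTC⟩ hef v hve hvf
    obtain ⟨c, rfl⟩ := hve
    obtain ⟨d, rfl⟩ := hvf
    rw [Set.mem_union, not_or, hmemC] at heTC hfTC
    have hv : v ∉ D := fun hv => by
      by_cases hc : c ∈ D
      exacts [heTC.2 ⟨he, hv, hc⟩, heTC.1 (hDT hv hc he)]
    obtain ⟨a, b, hab, ha, hb⟩ := hdeg v hv
    rcases eq_or_eq_or_eq_of_adj hG (hTG ha) (hTG hb) he hf hab (by rintro rfl; exact heTC.1 ha)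
      (by rintro rfl; exact heTC.1 hb) with rfl | rfl | rfl
    exacts [hfTC.1 ha, hfTC.1 hb, hef rfl]

theorem hasDecomposition_of_isTree [Finite V] (hG : G.IsRegularOfDegree 3) {F : G.Subgraph}
    (hF : F.coe.IsTree) (hD : IsInducedCyclePacking G k F.vertsᶜ)
    (hdeg : ∀ v ∈ F.verts, ∃ a b, a ≠ b ∧ G.Adj v a ∧ G.Adj v b ∧
      (a ∈ F.verts → F.Adj v a) ∧ (b ∈ F.verts → F.Adj v b)) :
    HasDecomposition G k := by
  have hout (v) : ∃ u, v ∉ F.verts → G.Adj v u ∧ u ∈ F.verts ∧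
      ∀ u', G.Adj v u' → u' ∈ F.verts → u' = u := by
    by_cases hv : v ∈ F.verts
    · exact ⟨v, fun h => absurd hv h⟩
    · obtain ⟨u, ⟨hvu, hu⟩, huniq⟩ := hD.existsUnique_adj_notMem hG hv
      exact ⟨u, fun _ => ⟨hvu, not_not.1 hu, fun u' h h' => huniq u' ⟨h, not_not.2 h'⟩⟩⟩
  choose g hg using hout
  have hpendant {u v} (hv : v ∉ F.verts) (hu : u ∈ F.verts) (hvu : G.Adj v u) :
      s(v, u) ∈ F.edgeSet ∪ (fun v => s(v, g v)) '' F.vertsᶜ :=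
    .inr ⟨v, hv, by rw [(hg v hv).2.2 u hvu hu]⟩
  have hmem {a b} (hab : G.Adj a b) (ha : a ∈ F.verts) (h : b ∈ F.verts → F.Adj a b) :
      s(a, b) ∈ F.edgeSet ∪ (fun v => s(v, g v)) '' F.vertsᶜ := by
    by_cases hb : b ∈ F.verts
    · exact .inl (h hb)
    · exact Sym2.eq_swap ▸ hpendant hb ha hab.symm
  refine hD.hasDecomposition hG (Set.union_subset F.edgeSet_subset ?_)
    (isTree_fromEdgeSet_union_image hF fun v hv => (hg v hv).2.1) (fun a b hab ha hb => ?_)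
    (fun v hv u hu => hpendant hv (not_not.1 hu)) fun v hv => ?_
  · exact Set.image_subset_iff.2 fun v hv => (hg v hv).1
  · rcases hab with hab | ⟨v, hv, hab⟩
    · exact ha (F.edge_vert hab)
    · rcases Sym2.eq_iff.1 hab with ⟨rfl, rfl⟩ | ⟨rfl, rfl⟩
      exacts [hb (hg v hv).2.1, ha (hg v hv).2.1]
  · obtain ⟨a, b, hab, hva, hvb, ha, hb⟩ := hdeg v (not_not.1 hv)
    exact ⟨a, b, hab, hmem hva (not_not.1 hv) ha, hmem hvb (not_not.1 hv) hb⟩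

end IsInducedCyclePacking

/-- A Hamiltonian path of `G` with `n` edges, encoded by the vertex at each of the positions
`0, …, n`; the values of `vert` beyond `n` are irrelevant. -/
structure HamiltonianPath (G : SimpleGraph V) (n : ℕ) where
  vert : ℕ → V
  bijOn : Set.BijOn vert (Set.Iic n) Set.univ
  adj_succ : ∀ ⦃s⦄, s < n → G.Adj (vert s) (vert (s + 1))

namespace HamiltonianPath

open Set

variable {n : ℕ} (P : HamiltonianPath G n) {F : G.Subgraph} {S : Set ℕ}
  {a b c d i j k l m p r s s' t t' u w x y z : ℕ}

/-- Adjacency in `G` of the vertices at two positions of the path. -/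
def Adj (s t : ℕ) : Prop :=
  s ≤ n ∧ t ≤ n ∧ G.Adj (P.vert s) (P.vert t)

/-- `s` and `t` are the positions of the ends of an edge of `G` outside the path. -/
def Chord (s t : ℕ) : Prop :=
  P.Adj s t ∧ t ≠ s + 1 ∧ s ≠ t + 1

/-- Some edge of `G` outside the path has both its ends at positions in `S`. -/
def HasChord (S : Set ℕ) : Prop :=
  ∃ s ∈ S, ∃ t ∈ S, P.Chord s t

variable {P}

theorem Adj.symm (h : P.Adj s t) : P.Adj t s :=
  ⟨h.2.1, h.1, h.2.2.symm⟩

theorem Adj.left_le (h : P.Adj s t) : s ≤ n := h.1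

theorem Adj.right_le (h : P.Adj s t) : t ≤ n := h.2.1

theorem Adj.ne (h : P.Adj s t) : s ≠ t := by
  rintro rfl
  exact G.irrefl h.2.2

theorem Chord.adj (h : P.Chord s t) : P.Adj s t := h.1

theorem Chord.symm (h : P.Chord s t) : P.Chord t s :=
  ⟨h.1.symm, h.2.2, h.2.1⟩

theorem Adj.chord (h : P.Adj s t) (hst : s + 1 < t ∨ t + 1 < s) : P.Chord s t :=
  ⟨h, by omega, by omega⟩

theorem Chord.lt_or_lt (h : P.Chord s t) : s + 1 < t ∨ t + 1 < s := by
  have := h.adj.ne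
  have := h.2
  omega

variable (P) in
theorem adj_add_one (hs : s < n) : P.Adj s (s + 1) :=
  ⟨hs.le, hs, P.adj_succ hs⟩

variable (P) in
theorem exists_position (v : V) : ∃ s ≤ n, P.vert s = v :=
  P.bijOn.surjOn (mem_univ v)

variable (P) in
theorem vert_mem_image_iff (hS : S ⊆ Iic n) (hs : s ≤ n) : P.vert s ∈ P.vert '' S ↔ s ∈ S :=
  P.bijOn.injOn.mem_image_iff hS hs

theorem HasChord.mono {T : Set ℕ} (h : P.HasChord S) (hST : S ⊆ T) : P.HasChord T := by
  obtain ⟨s, hs, t, ht, hst⟩ := h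
  exact ⟨s, hST hs, t, hST ht, hst⟩

theorem HasChord.exists_lt (h : P.HasChord S) : ∃ s ∈ S, ∃ t ∈ S, s < t ∧ P.Chord s t := by
  obtain ⟨s, hs, t, ht, hst⟩ := h
  rcases hst.lt_or_lt with h | h
  · exact ⟨s, hs, t, ht, by omega, hst⟩
  · exact ⟨t, ht, s, hs, by omega, hst.symm⟩

theorem not_hasChord_singleton : ¬ P.HasChord {s} := by
  rintro ⟨_, rfl, _, rfl, h⟩
  exact h.adj.ne rfl

section Cubic

variable [G.LocallyFinite] (hG : G.IsRegularOfDegree 3)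

include hG

theorem Adj.eq_or_eq_or_eq (ha : P.Adj s a) (hb : P.Adj s b) (hc : P.Adj s c) (ht : P.Adj s t)
    (hab : a ≠ b) (hac : a ≠ c) (hbc : b ≠ c) : t = a ∨ t = b ∨ t = c := by
  have hinj {x y} (hx : P.Adj s x) (hy : P.Adj s y) : P.vert x = P.vert y ↔ x = y :=
    P.bijOn.injOn.eq_iff hx.right_le hy.right_le
  have h := eq_or_eq_or_eq_of_adj hG ha.2.2 hb.2.2 hc.2.2 ht.2.2
  rw [Ne, Ne, Ne, hinj ha hb, hinj ha hc, hinj hb hc, hinj ht ha, hinj ht hb, hinj ht hc] at h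
  exact h hab hac hbc

variable (P) in
theorem exists_adj_ne_ne (hs : s ≤ n) (a b : ℕ) : ∃ c, P.Adj s c ∧ c ≠ a ∧ c ≠ b := by
  obtain ⟨v, hsv, hva, hvb⟩ := HoffmannOstenhof.exists_adj_ne_ne hG (P.vert s) (P.vert a) (P.vert b)
  obtain ⟨c, hc, rfl⟩ := P.exists_position v
  exact ⟨c, ⟨hs, hc, hsv⟩, by rintro rfl; exact hva rfl, by rintro rfl; exact hvb rfl⟩

theorem Chord.eq (hs : 0 < s) (hsn : s < n) (h : P.Chord s t) (h' : P.Chord s t') : t = t' := by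
  have hpred := P.adj_add_one (s := s - 1) (by omega)
  rw [Nat.sub_add_cancel hs] at hpred
  have := h.lt_or_lt
  have := h'.lt_or_lt
  have := hpred.symm.eq_or_eq_or_eq hG (P.adj_add_one hsn) h.adj h'.adj
  omega

theorem Chord.eq_or_eq (ha : P.Chord s a) (hb : P.Chord s b) (hab : a ≠ b) (h : P.Chord s t) :
    t = a ∨ t = b := by
  have := ha.lt_or_lt
  have := hb.lt_or_lt
  have := h.lt_or_lt
  have := ha.adj.left_le
  have := ha.adj.right_le
  rcases Nat.eq_zero_or_pos s with rfl | hs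
  · have := (P.adj_add_one (s := 0) (by omega)).eq_or_eq_or_eq hG ha.adj hb.adj h.adj
    omega
  · have hpred := P.adj_add_one (s := s - 1) (by omega)
    rw [Nat.sub_add_cancel hs] at hpred
    have := hpred.symm.eq_or_eq_or_eq hG ha.adj hb.adj h.adj
    omega

variable (P) in
theorem exists_chord (hs : 0 < s) (hsn : s < n) : ∃ t, P.Chord s t := by
  obtain ⟨t, hst, h, h'⟩ := P.exists_adj_ne_ne hG hsn.le (s - 1) (s + 1)
  exact ⟨t, hst, h', by omega⟩

variable (P) in
theorem exists_chord_ne (hs : s = 0 ∨ s = n) (b : ℕ) : ∃ t, P.Chord s t ∧ t ≠ b := by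
  obtain ⟨t, hst, h, hb⟩ := P.exists_adj_ne_ne hG (s := s) (by omega)
    (if s = 0 then 1 else n - 1) b
  have := hst.right_le
  exact ⟨t, ⟨hst, by grind, by grind⟩, hb⟩

variable (P) in
theorem exists_chord_lt (hs : s = 0 ∨ s = n) : ∃ a b, a < b ∧ P.Chord s a ∧ P.Chord s b := by
  obtain ⟨a, ha, -⟩ := P.exists_chord_ne hG hs 0
  obtain ⟨b, hb, hba⟩ := P.exists_chord_ne hG hs a
  rcases hba.lt_or_gt with h | h
  exacts [⟨b, a, h, hb, ha⟩, ⟨a, b, h, ha, hb⟩]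

end Cubic

section Segment

variable (P)

theorem exists_isPath_of_le (hst : s ≤ t) (ht : t ≤ n) :
    ∃ p : G.Walk (P.vert s) (P.vert t), p.IsPath ∧ (∀ v, v ∈ p.support ↔ v ∈ P.vert '' Icc s t) ∧
      ∀ r, s ≤ r → r < t → s(P.vert r, P.vert (r + 1)) ∈ p.edges := by
  induction t, hst using Nat.le_induction with
  | base => exact ⟨.nil, .nil, by simp, by omega⟩
  | succ t hst ih =>
    obtain ⟨p, hp, hsupp, hedges⟩ := ih (by omega)
    refine ⟨p.concat (P.adj_succ ht), hp.concat ?_ _, fun v => ?_, fun r hsr hrt => ?_⟩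
    · rw [hsupp, P.vert_mem_image_iff (fun r hr => hr.2.trans (Nat.le_of_succ_le ht)) ht]
      simp
    · rw [Walk.support_concat, List.mem_append, hsupp,
        ← Set.insert_Icc_right_eq_Icc_add_one (by omega),
        image_insert_eq]
      simp [or_comm]
    · rw [Walk.edges_concat, List.concat_eq_append, List.mem_append]
      rcases (Nat.lt_succ_iff_lt_or_eq.1 hrt) with h | rfl
      exacts [.inl (hedges r hsr h), .inr (List.mem_singleton_self _)]

theorem exists_isPath (hs : s ≤ n) (ht : t ≤ n) :
    ∃ p : G.Walk (P.vert s) (P.vert t), p.IsPath ∧ (∀ v, v ∈ p.support ↔ v ∈ P.vert '' uIcc s t) ∧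
      ∀ r, r ∈ uIcc s t → r + 1 ∈ uIcc s t → s(P.vert r, P.vert (r + 1)) ∈ p.edges := by
  rcases le_total s t with hst | hts
  · obtain ⟨p, hp, hsupp, hedges⟩ := P.exists_isPath_of_le hst ht
    rw [uIcc_of_le hst]
    exact ⟨p, hp, hsupp, fun r hr hr' => hedges r hr.1 hr'.2⟩
  · obtain ⟨p, hp, hsupp, hedges⟩ := P.exists_isPath_of_le hts hs
    rw [uIcc_of_ge hts]
    refine ⟨p.reverse, hp.reverse, fun v => ?_, fun r hr hr' => ?_⟩
    · rw [Walk.support_reverse, List.mem_reverse, hsupp]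
    · rw [Walk.edges_reverse, List.mem_reverse]
      exact hedges r hr.1 hr'.2

variable {P}

theorem exists_isPath_isChordless (hs : s ≤ n) (ht : t ≤ n) (hst : ¬ P.HasChord (uIcc s t)) :
    ∃ p : G.Walk (P.vert s) (P.vert t), p.IsPath ∧ p.IsChordless ∧
      ∀ v, v ∈ p.support ↔ v ∈ P.vert '' uIcc s t := by
  obtain ⟨p, hp, hsupp, hedges⟩ := P.exists_isPath hs ht
  refine ⟨p, hp, Walk.isChordless_iff_forall_mem_edges.2 fun x y hx hy hxy => ?_, hsupp⟩
  obtain ⟨a, ha, rfl⟩ := (hsupp x).1 hx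
  obtain ⟨b, hb, rfl⟩ := (hsupp y).1 hy
  have hab : P.Adj a b := ⟨ha.2.trans (sup_le hs ht), hb.2.trans (sup_le hs ht), hxy⟩
  by_cases h₁ : b = a + 1
  · subst h₁
    exact hedges a ha hb
  by_cases h₂ : a = b + 1
  · subst h₂
    exact Sym2.eq_swap ▸ hedges b hb ha
  · exact absurd ⟨a, ha, b, hb, hab, h₁, h₂⟩ hst

theorem isInducedCyclePacking_union (hst : P.Adj s t) (hst' : P.Adj s' t')
    (hne : s ≠ s' ∨ t ≠ t') (hs : ¬ P.HasChord (uIcc s s')) (ht : ¬ P.HasChord (uIcc t t'))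
    (hdisj : Disjoint (uIcc s s') (uIcc t t'))
    (hcross : ∀ u ∈ uIcc s s', ∀ w ∈ uIcc t t', P.Adj u w → u = s ∧ w = t ∨ u = s' ∧ w = t') :
    IsInducedCyclePacking G 1 (P.vert '' (uIcc s s' ∪ uIcc t t')) := by
  have hle : ∀ r ∈ uIcc s s', r ≤ n := fun r hr => hr.2.trans (sup_le hst.left_le hst'.left_le)
  have hle' : ∀ r ∈ uIcc t' t, r ≤ n := fun r hr => hr.2.trans (sup_le hst'.right_le hst.right_le)
  rw [uIcc_comm t t'] at hdisj ht hcross ⊢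
  obtain ⟨p, hp, hp', hpsupp⟩ := exists_isPath_isChordless hst.left_le hst'.left_le hs
  obtain ⟨q, hq, hq', hqsupp⟩ := exists_isPath_isChordless hst'.right_le hst.right_le ht
  have hinj {x y} (hx : x ≤ n) (hy : y ≤ n) : P.vert x = P.vert y ↔ x = y :=
    P.bijOn.injOn.eq_iff hx hy
  have h := IsInducedCyclePacking.of_paths hp hq hp' hq' hst'.2.2 hst.symm.2.2 ?_ ?_ ?_
  · simpa only [hpsupp, hqsupp, ← mem_union, ← image_union, ofPred_mem_eq] using h
  · rw [Ne, Ne, hinj hst.left_le hst'.left_le, hinj hst'.right_le hst.right_le]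
    exact hne.imp_right Ne.symm
  · intro v hv hv'
    obtain ⟨r, hr, rfl⟩ := (hpsupp v).1 hv
    rw [hqsupp, P.vert_mem_image_iff hle' (hle r hr)] at hv'
    exact Set.disjoint_left.1 hdisj hr hv'
  · intro x hx y hy hxy
    obtain ⟨a, ha, rfl⟩ := (hpsupp x).1 hx
    obtain ⟨b, hb, rfl⟩ := (hqsupp y).1 hy
    rcases hcross a ha b hb ⟨hle a ha, hle' b hb, hxy⟩ with ⟨rfl, rfl⟩ | ⟨rfl, rfl⟩ <;> simp

end Segment

section MinChord

/-- A chord with no other chord between its ends `i` and `j`: together with the path from `i` to `j`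
it forms an induced cycle. -/
def IsMinChord (P : HamiltonianPath G n) (i j : ℕ) : Prop :=
  i < j ∧ P.Chord i j ∧ ∀ ⦃s t⦄, i ≤ s → s < t → t ≤ j → P.Chord s t → s = i ∧ t = j

theorem Chord.exists_isMinChord (hst : s < t) (h : P.Chord s t) :
    ∃ i j, s ≤ i ∧ j ≤ t ∧ P.IsMinChord i j := by
  induction hd : t - s using Nat.strong_induction_on generalizing s t with
  | _ d ih =>
    by_cases hmin : P.IsMinChord s t
    · exact ⟨s, t, le_rfl, le_rfl, hmin⟩
    · obtain ⟨s', t', hs, hst', ht, h', hne⟩ : ∃ s' t', s ≤ s' ∧ s' < t' ∧ t' ≤ t ∧ P.Chord s' t' ∧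
          ¬ (s' = s ∧ t' = t) := by
        simpa [IsMinChord, hst, h] using hmin
      obtain ⟨i, j, hi, hj, hij⟩ := ih (t' - s') (by omega) hst' h' rfl
      exact ⟨i, j, hs.trans hi, hj.trans ht, hij⟩

theorem HasChord.exists_isMinChord (hS : S.OrdConnected) (h : P.HasChord S) :
    ∃ i ∈ S, ∃ j ∈ S, P.IsMinChord i j := by
  obtain ⟨s, hs, t, ht, hst, h⟩ := h.exists_lt
  obtain ⟨i, j, hi, hj, hij⟩ := h.exists_isMinChord hst
  exact ⟨i, hS.out hs ht ⟨hi, hij.1.le.trans hj⟩, j, hS.out hs ht ⟨hi.trans hij.1.le, hj⟩, hij⟩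

theorem IsMinChord.not_hasChord_Ico (h : P.IsMinChord i j) : ¬ P.HasChord (Ico i j) := fun h' => by
  obtain ⟨s, hs, t, ht, hst, h'⟩ := h'.exists_lt
  exact ht.2.ne (h.2.2 hs.1 hst ht.2.le h').2

theorem IsMinChord.isInducedCyclePacking (h : P.IsMinChord i j) :
    IsInducedCyclePacking G 1 (P.vert '' Icc i j) := by
  have hij := h.2.1.lt_or_lt
  have hlt := h.1
  have hpred := P.adj_add_one (s := j - 1) (by have := h.2.1.adj.right_le; omega)
  rw [Nat.sub_add_cancel (by omega)] at hpred
  have hunion : Icc i j = uIcc i (j - 1) ∪ uIcc j j := by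
    rw [uIcc_of_le (by omega), uIcc_self]
    ext
    simp only [mem_Icc, mem_union, mem_singleton_iff]
    omega
  rw [hunion]
  refine isInducedCyclePacking_union h.2.1.adj hpred (.inl (by omega)) ?_ ?_ ?_ ?_
  · rw [uIcc_of_le (by omega)]
    exact fun h' => h.not_hasChord_Ico (h'.mono fun r hr => ⟨hr.1, by have := hr.2; omega⟩)
  · rw [uIcc_self]
    exact not_hasChord_singleton
  · rw [uIcc_of_le (by omega), uIcc_self, Set.disjoint_singleton_right, mem_Icc]
    omega
  · rw [uIcc_of_le (by omega), uIcc_self]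
    rintro u ⟨hiu, huj⟩ w rfl huw
    by_cases hu : u = w - 1
    · exact .inr ⟨hu, rfl⟩
    · exact .inl ⟨(h.2.2 hiu (by omega) le_rfl (huw.chord (by omega))).1, rfl⟩

end MinChord

section Certificate

/-- `F` is a subtree of `G` whose vertices are at the positions in `S` and which contains every
edge of the path between such vertices. -/
structure IsTreeOn (P : HamiltonianPath G n) (F : G.Subgraph) (S : Set ℕ) : Prop where
  isTree : F.coe.IsTree
  subset : S ⊆ Iic n
  verts : F.verts = P.vert '' S
  adj : ∀ ⦃s⦄, s ∈ S → s + 1 ∈ S → F.Adj (P.vert s) (P.vert (s + 1))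

theorem exists_isTreeOn_Ico (P : HamiltonianPath G n) (hst : s < t) (ht : t ≤ n + 1) :
    ∃ F, P.IsTreeOn F (Ico s t) := by
  have hIcc : Ico s t = Icc s (t - 1) := by
    ext
    simp only [mem_Ico, mem_Icc]
    omega
  obtain ⟨p, hp, hsupp, hedges⟩ := P.exists_isPath_of_le (s := s) (t := t - 1) (by omega) (by omega)
  refine ⟨p.toSubgraph, isTree_coe_toSubgraph hp, fun r hr => ?_, ?_, fun r hr hr' => ?_⟩
  · exact Nat.lt_succ_iff.1 (hr.2.trans_le ht)
  · ext v
    rw [p.mem_verts_toSubgraph, hsupp, hIcc]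
  · rw [Walk.adj_toSubgraph_iff_mem_edges]
    have := hr'.2
    exact hedges r hr.1 (by omega)

theorem IsTreeOn.exists_union_Ico (hF : P.IsTreeOn F S) (ht : t ≤ n + 1)
    (hsep : ∀ r ∈ S, r + 1 < s ∨ t < r)
    (huw : s < t → u ∈ Ico s t ∧ w ∈ S ∧ P.Adj u w) :
    ∃ F', F ≤ F' ∧ P.IsTreeOn F' (S ∪ Ico s t) ∧ (s < t → F'.Adj (P.vert u) (P.vert w)) := by
  rcases lt_or_ge s t with hst | hts
  swap
  · rw [Ico_eq_empty hts.not_gt, union_empty]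
    exact ⟨F, le_rfl, hF, fun h => absurd h hts.not_gt⟩
  obtain ⟨hu, hw, huw⟩ := huw hst
  obtain ⟨H, hH⟩ := P.exists_isTreeOn_Ico hst ht
  have hdisj : Disjoint F.verts H.verts := by
    rw [hF.verts, hH.verts, Set.disjoint_left]
    rintro _ ⟨r, hr, rfl⟩ hr'
    obtain ⟨hsr, hrt⟩ := (P.vert_mem_image_iff hH.subset (hF.subset hr)).1 hr'
    have := hsep r hr
    omega
  have hwF : P.vert w ∈ F.verts := hF.verts ▸ mem_image_of_mem _ hw
  have huH : P.vert u ∈ H.verts := hH.verts ▸ mem_image_of_mem _ hu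
  refine ⟨F ⊔ H ⊔ G.subgraphOfAdj huw.symm.2.2, le_sup_left.trans le_sup_left, ⟨?_, ?_, ?_, ?_⟩,
    fun _ => .inr (by simp)⟩
  · exact isTree_coe_sup_subgraphOfAdj hF.isTree hH.isTree
      (hF.verts ▸ ((finite_Iic n).subset hF.subset).image _)
      (hH.verts ▸ ((finite_Iic n).subset hH.subset).image _) hdisj hwF huH _
  · exact union_subset hF.subset hH.subset
  · rw [Subgraph.verts_sup, Subgraph.verts_sup, subgraphOfAdj_verts, image_union, ← hF.verts,
      ← hH.verts]
    exact union_eq_left.2 (insert_subset (.inl hwF) (singleton_subset_iff.2 (.inr huH)))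
  · rintro r (hr | hr) (hr' | hr')
    · exact .inl (.inl (hF.adj hr hr'))
    · have := hsep r hr
      have := hr'.1
      have := hr'.2
      omega
    · have := hsep _ hr'
      have := hr.1
      have := hr.2
      omega
    · exact .inl (.inr (hH.adj hr hr'))

variable [G.LocallyFinite] (hG : G.IsRegularOfDegree 3)

include hG

theorem IsTreeOn.hasDecomposition (hF : P.IsTreeOn F S)
    (hD : IsInducedCyclePacking G m (P.vert '' (Iic n \ S)))
    (hend : ∀ s ∈ S, s = 0 ∨ s = n →
      ∃ t, P.Chord s t ∧ (t ∈ S → F.Adj (P.vert s) (P.vert t))) :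
    HasDecomposition G m := by
  have : Finite V := by
    rw [← Set.finite_univ_iff, ← P.bijOn.image_eq]
    exact (finite_Iic n).image _
  have hcompl : P.vert '' (Iic n \ S) = F.vertsᶜ := by
    rw [P.bijOn.injOn.image_sdiff_subset hF.subset, P.bijOn.image_eq, hF.verts, compl_eq_univ_sdiff]
  rw [hcompl] at hD
  refine hD.hasDecomposition_of_isTree hG hF.isTree fun v hv => ?_
  rw [hF.verts] at hv
  obtain ⟨s, hs, rfl⟩ := hv
  have hsn : s ≤ n := hF.subset hs
  suffices ∃ a b, a ≠ b ∧ P.Adj s a ∧ P.Adj s b ∧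
      (a ∈ S → F.Adj (P.vert s) (P.vert a)) ∧ (b ∈ S → F.Adj (P.vert s) (P.vert b)) by
    obtain ⟨a, b, hab, ha, hb, haF, hbF⟩ := this
    refine ⟨P.vert a, P.vert b, fun h => hab (P.bijOn.injOn ha.right_le hb.right_le h), ha.2.2,
      hb.2.2, ?_, ?_⟩
    · rwa [hF.verts, P.vert_mem_image_iff hF.subset ha.right_le]
    · rwa [hF.verts, P.vert_mem_image_iff hF.subset hb.right_le]
  have hsucc (h : s < n) : P.Adj s (s + 1) ∧ (s + 1 ∈ S → F.Adj (P.vert s) (P.vert (s + 1))) :=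
    ⟨P.adj_add_one h, fun h' => hF.adj hs h'⟩
  have hpred (h : 0 < s) : P.Adj s (s - 1) ∧ (s - 1 ∈ S → F.Adj (P.vert s) (P.vert (s - 1))) := by
    obtain ⟨r, rfl⟩ := Nat.exists_eq_add_of_lt h
    simp only [zero_add, Nat.add_sub_cancel] at hs hsn ⊢
    exact ⟨(P.adj_add_one hsn).symm, fun h' => (hF.adj h' hs).symm⟩
  by_cases hint : 0 < s ∧ s < n
  · exact ⟨s - 1, s + 1, by omega, (hpred hint.1).1, (hsucc hint.2).1, (hpred hint.1).2,
      (hsucc hint.2).2⟩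
  obtain ⟨t, hst, htF⟩ := hend s hs (by omega)
  have := hst.lt_or_lt
  have := hst.adj.right_le
  rcases Nat.eq_zero_or_pos s with h | h
  · exact ⟨s + 1, t, by omega, (hsucc (by omega)).1, hst.adj, (hsucc (by omega)).2, htF⟩
  · exact ⟨s - 1, t, by omega, (hpred h).1, hst.adj, (hpred h).2, htF⟩

/-- The cycles occupy `[0, p)`, `[i, j)` and `[k, l)`; the rest of the path is up to three segments,
the outer two of which are joined to the middle one by the edges `uw` and `nc`. -/
theorem hasDecomposition_of_intervals (hpi : p ≤ i) (hij : i < j) (hjk : j < k) (hkl : k < l)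
    (hln : l ≤ n + 1) (hL : p < i → u ∈ Ico p i ∧ w ∈ Ico j k ∧ P.Adj u w ∧ (p = 0 → u = 0))
    (hR : l ≤ n → c ∈ Ico j k ∧ P.Adj n c)
    (hD : IsInducedCyclePacking G m (P.vert '' (Iio p ∪ Ico i j ∪ Ico k l))) :
    HasDecomposition G m := by
  obtain ⟨F₁, hF₁⟩ := P.exists_isTreeOn_Ico hjk (by omega)
  obtain ⟨F₂, -, hF₂, hL'⟩ := hF₁.exists_union_Ico (s := p) (t := i) (u := u) (w := w) (by omega)
    (fun r hr => .inr (hij.trans_le hr.1)) fun h => ⟨(hL h).1, (hL h).2.1, (hL h).2.2.1⟩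
  obtain ⟨F, hF₂₃, hF, hR'⟩ := hF₂.exists_union_Ico (s := l) (t := n + 1) (u := n) (w := c) le_rfl
    (by rintro r (⟨-, hr⟩ | ⟨-, hr⟩) <;> left <;> omega)
    fun h => ⟨⟨by omega, by omega⟩, .inl (hR (by omega)).1, (hR (by omega)).2⟩
  have hcompl : Iio p ∪ Ico i j ∪ Ico k l = Iic n \ (Ico j k ∪ Ico p i ∪ Ico l (n + 1)) := by
    ext
    simp only [mem_union, mem_Ico, mem_Iio, mem_sdiff, mem_Iic]
    omega
  refine hF.hasDecomposition hG (hcompl ▸ hD) ?_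
  rintro s ((hs | hs) | hs) hs'
  · have := hs.1
    have := hs.2
    omega
  · obtain rfl : s = 0 := by
      have := hs.2
      omega
    obtain rfl : p = 0 := Nat.le_zero.1 hs.1
    obtain ⟨hu, hw, huw, h₀⟩ := hL hs.2
    obtain rfl := h₀ rfl
    exact ⟨w, huw.chord (by have := hw.1; have := hs.2; omega), fun _ => hF₂₃.2 (hL' hs.2)⟩
  · obtain rfl : s = n := by
      have := hs.1
      omega
    obtain ⟨hc, hnc⟩ := hR hs.1
    have := hs.1
    have := hc.2
    exact ⟨c, hnc.chord (by omega), fun _ => hR' (by omega)⟩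

end Certificate

section Reindex

/-- The Hamiltonian path traversing a Hamiltonian walk. -/
def ofWalk {u v : V} (p : G.Walk u v) (hp : p.IsPath) (hp' : ∀ w, w ∈ p.support) :
    HamiltonianPath G p.length where
  vert := p.getVert
  bijOn := ⟨mapsTo_univ _ _, hp.getVert_injOn, fun w _ => by
    obtain ⟨s, hs, hsn⟩ := Walk.mem_support_iff_exists_getVert.1 (hp' w)
    exact ⟨s, hsn, hs⟩⟩
  adj_succ _ hs := p.adj_getVert_succ hs

/-- The Hamiltonian path visiting the vertices of `P` in the order given by an involution of the
positions. -/
def reindex (P : HamiltonianPath G n) (σ : ℕ → ℕ) (hσ : MapsTo σ (Iic n) (Iic n))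
    (hinv : LeftInvOn σ σ (Iic n)) (hadj : ∀ ⦃s⦄, s < n → P.Adj (σ s) (σ (s + 1))) :
    HamiltonianPath G n where
  vert := P.vert ∘ σ
  bijOn := P.bijOn.comp (InvOn.bijOn ⟨hinv, hinv⟩ hσ hσ)
  adj_succ _ hs := (hadj hs).2.2

/-- The path `P` traversed backwards. -/
def reverse (P : HamiltonianPath G n) : HamiltonianPath G n :=
  P.reindex (n - ·) (fun s _ => Nat.sub_le n s) (fun _ hs => Nat.sub_sub_self hs) fun s hs => by
    have h := (P.adj_add_one (s := n - (s + 1)) (by omega)).symm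
    rwa [show n - (s + 1) + 1 = n - s by omega] at h

/-- Given an edge from the first vertex to position `r`, the Hamiltonian path which visits the
positions `r - 1, …, 0, r, …, n` of `P` in this order. -/
def rotate (P : HamiltonianPath G n) (h : P.Adj 0 r) : HamiltonianPath G n :=
  P.reindex (fun s => if s < r then r - 1 - s else s)
    (fun s (hs : s ≤ n) => show ite _ _ _ ≤ n by have := h.right_le; split_ifs <;> omega)
    (fun s _ => by dsimp only; split_ifs <;> omega) fun s hs => by
      rcases lt_trichotomy (s + 1) r with hsr | rfl | hsr
      · have h' := (P.adj_add_one (s := r - 1 - (s + 1)) (by have := h.right_le; omega)).symm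
        rw [if_pos (by omega), if_pos hsr]
        rwa [show r - 1 - (s + 1) + 1 = r - 1 - s by omega] at h'
      · simpa using h
      · rw [if_neg (by omega), if_neg (by omega)]
        exact P.adj_add_one hs

theorem reverse_adj (hs : s ≤ n) (ht : t ≤ n) :
    P.reverse.Adj s t ↔ P.Adj (n - s) (n - t) := by
  simp only [Adj, hs, ht, Nat.sub_le, true_and]
  rfl

theorem reverse_chord (hs : s ≤ n) (ht : t ≤ n) :
    P.reverse.Chord s t ↔ P.Chord (n - s) (n - t) := by
  rw [Chord, Chord, reverse_adj hs ht]
  refine and_congr_right fun _ => ?_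
  omega

theorem rotate_adj_of_lt (h : P.Adj 0 r) (hs : s < r) (ht : t < r) :
    (P.rotate h).Adj s t ↔ P.Adj (r - 1 - s) (r - 1 - t) := by
  have := h.right_le
  simp only [Adj, rotate, reindex, Function.comp_apply, if_pos hs, if_pos ht]
  rw [← and_assoc, ← and_assoc]
  refine and_congr_left fun _ => ?_
  omega

theorem rotate_adj_of_lt_of_le (h : P.Adj 0 r) (hs : s < r) (ht : r ≤ t) :
    (P.rotate h).Adj s t ↔ P.Adj (r - 1 - s) t := by
  simp only [Adj, rotate, reindex, Function.comp_apply, if_pos hs, if_neg ht.not_gt]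
  rw [← and_assoc, ← and_assoc]
  refine and_congr_left fun _ => ?_
  omega

theorem rotate_adj_of_le (h : P.Adj 0 r) (hs : r ≤ s) (ht : r ≤ t) :
    (P.rotate h).Adj s t ↔ P.Adj s t := by
  simp only [Adj, rotate, reindex, Function.comp_apply, hs.not_gt, ht.not_gt, if_false]

theorem rotate_chord_of_lt (h : P.Adj 0 r) (hs : s < r) (ht : t < r) :
    (P.rotate h).Chord s t ↔ P.Chord (r - 1 - s) (r - 1 - t) := by
  rw [Chord, Chord, rotate_adj_of_lt h hs ht]
  refine and_congr_right fun _ => ?_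
  omega

theorem rotate_chord_of_le (h : P.Adj 0 r) (hs : r ≤ s) (ht : r ≤ t) :
    (P.rotate h).Chord s t ↔ P.Chord s t := by
  rw [Chord, Chord, rotate_adj_of_le h hs ht]

theorem reverse_hasChord : P.reverse.HasChord S ↔ P.HasChord ((n - ·) ⁻¹' S) := by
  constructor <;> rintro ⟨s, hs, t, ht, hst⟩ <;>
    have hsn := hst.adj.left_le <;> have htn := hst.adj.right_le
  · refine ⟨n - s, ?_, n - t, ?_, (reverse_chord hsn htn).1 hst⟩ <;>
      rwa [mem_preimage, Nat.sub_sub_self ‹_›]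
  · refine ⟨n - s, hs, n - t, ht, (reverse_chord (Nat.sub_le _ _) (Nat.sub_le _ _)).2 ?_⟩
    rwa [Nat.sub_sub_self hsn, Nat.sub_sub_self htn]

theorem rotate_hasChord_Iio (h : P.Adj 0 r) :
    (P.rotate h).HasChord (Iio (r - 1 - c)) ↔ P.HasChord (Ioo c r) := by
  constructor
  · rintro ⟨s, hs, t, ht, hst⟩
    rw [mem_Iio] at hs ht
    rw [rotate_chord_of_lt h (by omega) (by omega)] at hst
    exact ⟨_, ⟨by omega, by omega⟩, _, ⟨by omega, by omega⟩, hst⟩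
  · rintro ⟨s, ⟨hs, hs'⟩, t, ⟨ht, ht'⟩, hst⟩
    refine ⟨r - 1 - s, mem_Iio.2 (by omega), r - 1 - t, mem_Iio.2 (by omega),
      (rotate_chord_of_lt h (by omega) (by omega)).2 ?_⟩
    rwa [Nat.sub_sub_self (by omega), Nat.sub_sub_self (by omega)]

theorem rotate_hasChord_Ioi (h : P.Adj 0 r) :
    (P.rotate h).HasChord (Ioi r) ↔ P.HasChord (Ioi r) := by
  constructor <;> rintro ⟨s, hs, t, ht, hst⟩
  · exact ⟨s, hs, t, ht, (rotate_chord_of_le h (le_of_lt hs) (le_of_lt ht)).1 hst⟩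
  · exact ⟨s, hs, t, ht, (rotate_chord_of_le h (le_of_lt hs) (le_of_lt ht)).2 hst⟩

end Reindex

theorem hasDecomposition_of_adj [G.LocallyFinite] (hG : G.IsRegularOfDegree 3) (h : P.Adj 0 n) :
    HasDecomposition G 1 := by
  obtain ⟨a, h0a, han⟩ := P.exists_chord_ne hG (.inl rfl) n
  have ha := h0a.lt_or_lt
  have han' := h0a.adj.right_le
  have h0n : P.Chord 0 n := h.chord (by omega)
  obtain ⟨i, j, -, hja, hij⟩ := h0a.exists_isMinChord (by omega)
  obtain ⟨F₁, hF₁⟩ := P.exists_isTreeOn_Ico (s := j + 1) (t := n + 1) (by omega) le_rfl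
  obtain ⟨F, -, hF, hadj⟩ := hF₁.exists_union_Ico (s := 0) (t := i) (u := 0) (w := n)
    (by have := hij.1; omega) (fun r hr => .inr (by have := hr.1; have := hij.1; omega))
    fun hi => ⟨⟨le_rfl, hi⟩, ⟨by omega, by omega⟩, h⟩
  have hcompl : Icc i j = Iic n \ (Ico (j + 1) (n + 1) ∪ Ico 0 i) := by
    ext
    simp only [mem_Icc, mem_sdiff, mem_Iic, mem_union, mem_Ico]
    omega
  refine hF.hasDecomposition hG (hcompl ▸ hij.isInducedCyclePacking) ?_
  rintro s hs (rfl | rfl)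
  · refine ⟨n, h0n, fun _ => hadj ?_⟩
    simp only [mem_union, mem_Ico] at hs
    omega
  · refine ⟨0, h0n.symm, fun h0 => (hadj ?_).symm⟩
    simp only [mem_union, mem_Ico] at h0
    omega

section Bridge

variable {lo hi : ℕ}

/-- Each end of the path has a chord into the middle part `[lo, hi]`, so that a left and a right
remainder of the path can be attached to the middle part. -/
structure Split (P : HamiltonianPath G n) (lo hi : ℕ) : Prop where
  exists_zero : ∃ b ∈ Icc lo hi, P.Chord 0 b
  exists_last : ∃ c ∈ Icc lo hi, P.Chord n c

/-- `xy` is the only edge between the parts `[0, lo)` and `(hi, n]` of the path, and every chord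
inside one of these parts passes strictly over the end of `xy` in that part. -/
structure IsBridge (P : HamiltonianPath G n) (lo hi x y : ℕ) : Prop where
  adj : P.Adj x y
  lt_lo : x < lo
  hi_lt : hi < y
  unique : ∀ ⦃s t⦄, s < lo → hi < t → P.Adj s t → s = x ∧ t = y
  left : ∀ ⦃s t⦄, s < t → t < lo → P.Chord s t → s < x ∧ x < t
  right : ∀ ⦃s t⦄, hi < s → s < t → P.Chord s t → s < y ∧ y < t

namespace Split

theorem lo_le_hi (h : P.Split lo hi) : lo ≤ hi := by
  obtain ⟨b, hb, -⟩ := h.exists_zero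
  exact hb.1.trans hb.2

variable [G.LocallyFinite] (hG : G.IsRegularOfDegree 3) (h : P.Split lo hi)

include hG h

theorem chord_unique (ht : t ∉ Icc lo hi) (ht' : t' ∉ Icc lo hi)
    (hst : P.Chord s t) (hst' : P.Chord s t') : t = t' := by
  by_contra hne
  obtain ⟨b, hb, h0b⟩ := h.exists_zero
  obtain ⟨c, hc, hnc⟩ := h.exists_last
  have := hst.adj.left_le
  rcases Nat.eq_zero_or_pos s with rfl | hs
  · rcases hst.eq_or_eq hG hst' hne h0b with rfl | rfl
    exacts [ht hb, ht' hb]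
  rcases this.eq_or_lt with rfl | hsn
  · rcases hst.eq_or_eq hG hst' hne hnc with rfl | rfl
    exacts [ht hc, ht' hc]
  · exact hne (hst.eq hG hs hsn hst')

theorem hasDecomposition (hij : i ≤ j) (hj : j < lo) (hk : hi < k) (hkl : k ≤ l) (hl : l ≤ n)
    (hD : IsInducedCyclePacking G m (P.vert '' (Icc i j ∪ Icc k l))) : HasDecomposition G m := by
  obtain ⟨b, ⟨hlob, hbhi⟩, h0b⟩ := h.exists_zero
  obtain ⟨c, ⟨hloc, hchi⟩, hnc⟩ := h.exists_last
  refine hasDecomposition_of_intervals hG (p := 0) (i := i) (j := j + 1) (k := k) (l := l + 1)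
    (u := 0) (w := b) (Nat.zero_le i) (by omega) (by omega) (by omega) (by omega)
    (fun hi => ⟨⟨le_rfl, hi⟩, ⟨by omega, by omega⟩, h0b.adj, fun _ => rfl⟩)
    (fun _ => ⟨⟨by omega, by omega⟩, hnc.adj⟩) ?_
  convert hD using 2
  ext
  simp only [mem_union, mem_Iio, mem_Ico, mem_Icc]
  omega

theorem mem_Ioo_of_chord (hij : P.Chord i j) (hi' : i ∉ Icc lo hi) (hj : j ∉ Icc lo hi)
    (hw : w ∉ Icc lo hi) (hwij : w ∉ Icc i j) (hu : u ∈ Icc i j) (huw : P.Chord u w) :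
    u ∈ Ioo i j := by
  refine ⟨hu.1.lt_of_ne ?_, hu.2.lt_of_ne ?_⟩
  · rintro rfl
    exact hwij (h.chord_unique hG hj hw hij huw ▸ ⟨hu.2, le_rfl⟩)
  · rintro rfl
    exact hwij (h.chord_unique hG hi' hw hij.symm huw ▸ ⟨le_rfl, hu.1⟩)

theorem exists_adj_of_isMinChord (hGdec : ¬ HasDecomposition G 2) (hij : P.IsMinChord i j)
    (hj : j < lo) (hkl : P.IsMinChord k l) (hk : hi < k) :
    ∃ u ∈ Ioo i j, ∃ w ∈ Ioo k l, P.Adj u w := by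
  by_contra! hcross
  have hlo := h.lo_le_hi
  have hl := hkl.2.1.adj.right_le
  have hjk : j + 1 < k := by omega
  have hij' := hij.1
  have hkl' := hkl.1
  have hdisj : Disjoint (P.vert '' Icc i j) (P.vert '' Icc k l) := by
    rw [Set.disjoint_left]
    rintro _ ⟨r, ⟨-, hr⟩, rfl⟩ hr'
    have := ((P.vert_mem_image_iff (fun r hr => hr.2.trans hl) (by omega)).1 hr').1
    omega
  refine hGdec (h.hasDecomposition hG hij.1.le hj hk hkl.1.le hl ?_)
  rw [image_union]
  refine hij.isInducedCyclePacking.union hkl.isInducedCyclePacking hdisj ?_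
  rintro _ ⟨u, hu, rfl⟩ _ ⟨w, hw, rfl⟩ huw
  have huw : P.Adj u w := ⟨by have := hu.2; omega, hw.2.trans hl, huw⟩
  have huw' : P.Chord u w := huw.chord (.inl (by have := hu.2; have := hw.1; omega))
  have hu' := h.mem_Ioo_of_chord hG hij.2.1 (w := w) (by grind) (by grind) (by grind) (by grind) hu
    huw'
  have hw' := h.mem_Ioo_of_chord hG hkl.2.1 (w := u) (by grind) (by grind) (by grind) (by grind) hw
    huw'.symm
  exact hcross u hu' w hw' huw

theorem exists_adj_of_hasChord (hGdec : ¬ HasDecomposition G 2) (hs : P.HasChord (Icc s s'))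
    (hs' : s' < lo) (ht : P.HasChord (Icc t t')) (ht' : hi < t) :
    ∃ u ∈ Ioo s s', ∃ w ∈ Ioo t t', P.Adj u w := by
  obtain ⟨i, hi, j, hj, hij⟩ := hs.exists_isMinChord ordConnected_Icc
  obtain ⟨k, hk, l, hl, hkl⟩ := ht.exists_isMinChord ordConnected_Icc
  obtain ⟨u, hu, w, hw, huw⟩ := h.exists_adj_of_isMinChord hG hGdec hij (hj.2.trans_lt hs') hkl
    (ht'.trans_le hk.1)
  exact ⟨u, Ioo_subset_Ioo hi.1 hj.2 hu, w, Ioo_subset_Ioo hk.1 hl.2 hw, huw⟩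

theorem hasDecomposition_of_box (hs : s < lo) (hs' : s' < lo) (ht : hi < t) (ht' : hi < t')
    (hst : P.Adj s t) (hst' : P.Adj s' t') (hne : s ≠ s') (hss' : ¬ P.HasChord (uIcc s s'))
    (htt' : ¬ P.HasChord (uIcc t t'))
    (hcross : ∀ u ∈ uIcc s s', ∀ w ∈ uIcc t t', P.Adj u w → u = s ∨ u = s') :
    HasDecomposition G 1 := by
  have hlo := h.lo_le_hi
  have hleft : ∀ u ∈ uIcc s s', u < lo := fun u hu => hu.2.trans_lt (sup_lt_iff.2 ⟨hs, hs'⟩)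
  have hright : ∀ w ∈ uIcc t t', hi < w := fun w hw => (lt_inf_iff.2 ⟨ht, ht'⟩).trans_le hw.1
  refine h.hasDecomposition hG inf_le_sup (sup_lt_iff.2 ⟨hs, hs'⟩) (lt_inf_iff.2 ⟨ht, ht'⟩)
    inf_le_sup (sup_le hst.right_le hst'.right_le)
    (isInducedCyclePacking_union hst hst' (.inl hne) hss' htt' ?_ fun u hu w hw huw => ?_)
  · rw [Set.disjoint_left]
    intro r hr hr'
    have := hleft r hr
    have := hright r hr'
    omega
  · have hu' := hleft u hu
    have hw' := hright w hw
    have huw' : P.Chord u w := huw.chord (by omega)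
    rcases hcross u hu w hw huw with rfl | rfl
    · exact .inl ⟨rfl, h.chord_unique hG (by grind) (by grind) huw' (hst.chord (by omega))⟩
    · exact .inr ⟨rfl, h.chord_unique hG (by grind) (by grind) huw' (hst'.chord (by omega))⟩

theorem eq_of_adj_isMinChord (hGdec : ¬ HasDecomposition G 2) (hkl : P.IsMinChord k l)
    (hk : hi < k) (hs : s < lo) (hs' : s' < lo) (ht : t ∈ Icc k l) (ht' : t' ∈ Icc k l)
    (hst : P.Adj s t) (hst' : P.Adj s' t') : s = s' := by
  by_contra hne
  wlog hlt : s < s' generalizing s s' t t'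
  · exact this hs' hs ht' ht hst' hst (Ne.symm hne) (by omega)
  have hlo := h.lo_le_hi
  have hkl' := hkl.1
  induction hd : s' - s using Nat.strong_induction_on generalizing s' t' with
  | _ d ih =>
    have hcross : ∀ u ∈ Ioo s s', ∀ w ∈ Icc k l, ¬ P.Adj u w := fun u hu w hw huw =>
      ih (u - s) (by grind) (hu.2.trans hs') hw huw hu.1.ne hu.1 rfl
    have hchord : ¬ P.HasChord (uIcc s s') := fun hc => by
      rw [uIcc_of_le hlt.le] at hc
      obtain ⟨u, hu, w, hw, huw⟩ := h.exists_adj_of_hasChord hG hGdec hc hs'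
        ⟨k, ⟨le_rfl, hkl'.le⟩, l, ⟨hkl'.le, le_rfl⟩, hkl.2.1⟩ hk
      exact hcross u hu w (Ioo_subset_Icc_self hw) huw
    have hmem {r q} (hr : r < lo) (hq : q ∈ Icc k l) (hrq : P.Adj r q) : q ∈ Ioo k l :=
      h.mem_Ioo_of_chord hG hkl.2.1 (w := r) (by grind) (by grind) (by grind) (by grind) hq
        (hrq.symm.chord (by grind))
    have ht₀ := hmem hs ht hst
    have ht₀' := hmem hs' ht' hst'
    have hbox := h.hasDecomposition_of_box hG hs hs' (hk.trans ht₀.1) (hk.trans ht₀'.1) hst hst'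
      hne hchord (fun hc => hkl.not_hasChord_Ico (hc.mono ?_)) fun u hu w hw huw => ?_
    · exact hGdec (hbox.mono one_le_two)
    · exact (ordConnected_Ioo.uIcc_subset ht₀ ht₀').trans Ioo_subset_Ico_self
    · rw [uIcc_of_le hlt.le] at hu
      by_contra hu'
      exact hcross u (by grind) w (ordConnected_Icc.uIcc_subset ht ht' hw) huw

theorem straddles_left (hGdec : ¬ HasDecomposition G 2) (hkl : P.IsMinChord k l) (hk : hi < k)
    (hx : x < lo) (hy : y ∈ Icc k l) (hxy : P.Adj x y) (hst : s < t) (ht : t < lo)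
    (hc : P.Chord s t) : s < x ∧ x < t := by
  obtain ⟨u, hu, w, hw, huw⟩ := h.exists_adj_of_hasChord hG hGdec
    ⟨s, ⟨le_rfl, hst.le⟩, t, ⟨hst.le, le_rfl⟩, hc⟩ ht
    ⟨k, ⟨le_rfl, hkl.1.le⟩, l, ⟨hkl.1.le, le_rfl⟩, hkl.2.1⟩ hk
  obtain rfl := h.eq_of_adj_isMinChord hG hGdec hkl hk (hu.2.trans ht) hx (Ioo_subset_Icc_self hw)
    hy huw hxy
  exact hu

theorem eq_of_adj (hGdec : ¬ HasDecomposition G 2) (hleft : P.HasChord (Iio lo)) (hx : x < lo)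
    (hy : hi < y) (hxy : P.Adj x y)
    (hstraddle : ∀ ⦃s t⦄, s < t → t < lo → P.Chord s t → s < x ∧ x < t)
    (hs : s < lo) (ht : hi < t) (hst : P.Adj s t) : s = x := by
  have hlo := h.lo_le_hi
  have hchord {r q} (hr : r < lo) (hq : hi < q) (hrq : P.Adj r q) : P.Chord r q :=
    hrq.chord (by omega)
  induction hd : (t - y) + (y - t) using Nat.strong_induction_on generalizing s t with
  | _ d ih =>
    by_contra hne
    have hright : ∀ w ∈ uIcc t y, hi < w := fun w hw => (lt_inf_iff.2 ⟨ht, hy⟩).trans_le hw.1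
    have hss : ¬ P.HasChord (uIcc s x) := fun hc => by
      obtain ⟨r, hr, q, hq, hrq, hc⟩ := hc.exists_lt
      have := hstraddle hrq (hq.2.trans_lt (sup_lt_iff.2 ⟨hs, hx⟩)) hc
      rw [Set.mem_uIcc] at hr hq
      omega
    have htt : ¬ P.HasChord (uIcc t y) := fun hc => by
      obtain ⟨i, -, j, hj, hij⟩ := hleft.exists_isMinChord ordConnected_Iio
      obtain ⟨u, hu, w, hw, huw⟩ := h.exists_adj_of_hasChord hG hGdec
        ⟨i, ⟨le_rfl, hij.1.le⟩, j, ⟨hij.1.le, le_rfl⟩, hij.2.1⟩ hj hc (lt_inf_iff.2 ⟨ht, hy⟩)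
      have hw' : hi < w := hright w (Ioo_subset_Icc_self hw)
      have hulo : u < lo := hu.2.trans hj
      have hwt : t < w ∧ w < y ∨ y < w ∧ w < t := by
        simp only [mem_Ioo, inf_lt_iff, lt_sup_iff] at hw
        omega
      obtain rfl := ih _ (by omega) hulo hw' huw rfl
      have := h.chord_unique hG (by grind) (by grind) (hchord hulo hw' huw) (hchord hulo hy hxy)
      omega
    refine hGdec ((h.hasDecomposition_of_box hG hs hx ht hy hst hxy hne hss htt
      fun u hu w hw huw => ?_).mono one_le_two)
    have hulo : u < lo := hu.2.trans_lt (sup_lt_iff.2 ⟨hs, hx⟩)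
    by_cases hwt : w = t
    · subst hwt
      exact .inl (h.chord_unique hG (by grind) (by grind) (hchord hulo ht huw).symm
        (hchord hs ht hst).symm)
    · rw [Set.mem_uIcc] at hw
      exact .inr (ih _ (by omega) hulo (by omega) huw rfl)

theorem exists_isBridge (hGdec : ¬ HasDecomposition G 2) (hleft : P.HasChord (Iio lo))
    (hright : P.HasChord (Ioi hi)) : ∃ x y, P.IsBridge lo hi x y := by
  have hlo := h.lo_le_hi
  obtain ⟨i, -, j, hj, hij⟩ := hleft.exists_isMinChord ordConnected_Iio
  obtain ⟨k, hk, l, -, hkl⟩ := hright.exists_isMinChord ordConnected_Ioi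
  obtain ⟨x, hx, y, hy, hxy⟩ := h.exists_adj_of_isMinChord hG hGdec hij hj hkl hk
  have hxlo : x < lo := hx.2.trans hj
  have hy' : hi < y := lt_trans hk hy.1
  have hstraddle ⦃s t⦄ (hst : s < t) (ht : t < lo) (hc : P.Chord s t) : s < x ∧ x < t :=
    h.straddles_left hG hGdec hkl hk hxlo (Ioo_subset_Icc_self hy) hxy hst ht hc
  have hunique ⦃s t⦄ (hs : s < lo) (ht : hi < t) (hst : P.Adj s t) : s = x ∧ t = y := by
    obtain rfl := h.eq_of_adj hG hGdec hleft hxlo hy' hxy hstraddle hs ht hst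
    exact ⟨rfl, h.chord_unique hG (by grind) (by grind) (hst.chord (by omega))
      (hxy.chord (by omega))⟩
  refine ⟨x, y, hxy, hxlo, hy', hunique, hstraddle, fun s t hs hst hc => ?_⟩
  obtain ⟨u, hu, w, hw, huw⟩ := h.exists_adj_of_hasChord hG hGdec
    ⟨i, ⟨le_rfl, hij.1.le⟩, j, ⟨hij.1.le, le_rfl⟩, hij.2.1⟩ hj
    ⟨s, ⟨le_rfl, hst.le⟩, t, ⟨hst.le, le_rfl⟩, hc⟩ hs
  obtain ⟨-, rfl⟩ := hunique (hu.2.trans hj) (hs.trans hw.1) huw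
  exact hw

end Split

end Bridge

section Theta

/-- The path together with the crossing chords `0b` and `nc` is a subdivision of a theta graph: its
branch vertices are at `c` and `b`, and `[0, c)`, `(c, b)` and `(b, n]` are the interiors of its
three nonempty sides. -/
structure Theta (P : HamiltonianPath G n) (b c : ℕ) : Prop where
  adj_zero : P.Adj 0 b
  adj_last : P.Adj n c
  pos : 0 < c
  add_one_lt : c + 1 < b
  lt : b < n

namespace Theta

theorem split (h : P.Theta b c) : P.Split c b := by
  have := h.pos
  have := h.add_one_lt
  have := h.lt
  exact ⟨⟨b, ⟨by omega, le_rfl⟩, h.adj_zero.chord (by omega)⟩,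
    ⟨c, ⟨le_rfl, by omega⟩, h.adj_last.chord (by omega)⟩⟩

theorem rotate (h : P.Theta b c) : (P.rotate h.adj_zero).Theta b (b - 1 - c) := by
  have := h.pos
  have := h.add_one_lt
  have := h.lt
  refine ⟨?_, ?_, by omega, by omega, h.lt⟩
  · rw [rotate_adj_of_lt_of_le h.adj_zero (by omega) le_rfl]
    have := P.adj_add_one (s := b - 1) (by omega)
    rwa [Nat.sub_add_cancel (by omega)] at this
  · refine Adj.symm ((rotate_adj_of_lt_of_le h.adj_zero (by omega) (by omega)).2 ?_)
    rw [Nat.sub_sub_self (by omega)]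
    exact h.adj_last.symm

theorem reverse (h : P.Theta b c) : P.reverse.Theta (n - c) (n - b) := by
  have := h.pos
  have := h.add_one_lt
  have := h.lt
  refine ⟨?_, ?_, by omega, by omega, by omega⟩
  · rw [reverse_adj (by omega) (by omega), Nat.sub_sub_self (by omega), Nat.sub_zero]
    exact h.adj_last
  · rw [reverse_adj (by omega) (by omega), Nat.sub_sub_self (by omega), Nat.sub_self]
    exact h.adj_zero

variable [G.LocallyFinite] (hG : G.IsRegularOfDegree 3) (h : P.Theta b c)

include hG h

theorem eq_zero_of_chord (hs : P.Chord s b) : s = 0 := by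
  have := h.add_one_lt
  exact hs.symm.eq hG (by omega) h.lt (h.adj_zero.symm.chord (by omega))

theorem eq_last_of_chord (hs : P.Chord c s) : s = n := by
  have := h.add_one_lt
  have := h.lt
  exact hs.eq hG h.pos (by omega) (h.adj_last.symm.chord (by omega))

theorem not_hasChord_Icc (hright : ¬ P.HasChord (Ioc b y)) : ¬ P.HasChord (Icc b y) := fun hc => by
  obtain ⟨s, hs, t, ht, hst, hc⟩ := hc.exists_lt
  rcases hs.1.eq_or_lt with rfl | hbs
  · have := h.eq_zero_of_chord hG hc.symm
    omega
  · exact hright ⟨s, ⟨hbs, hs.2⟩, t, ⟨hbs.trans hst, ht.2⟩, hc⟩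

theorem hasDecomposition_of_Icc_union_Icc (hx : x + 1 < b) (hy : b ≤ y) (hyn : y ≤ n)
    (hc : y < n → x < c) (hD : IsInducedCyclePacking G m (P.vert '' (Icc 0 x ∪ Icc b y))) :
    HasDecomposition G m := by
  have := h.add_one_lt
  refine hasDecomposition_of_intervals hG (p := 0) (i := 0) (j := x + 1) (k := b) (l := y + 1)
    (u := 0) (w := 0) le_rfl (by omega) hx (by omega) (by omega) (fun h => absurd h (by omega))
    (fun hy => ⟨⟨hc hy, by omega⟩, h.adj_last⟩) ?_
  convert hD using 2
  ext
  simp only [mem_union, mem_Iio, mem_Ico, mem_Icc]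
  omega

/-- The cycle runs through `0, …, x, y, …, b`. -/
theorem hasDecomposition_of_corner (hx : x < c) (hy : b < y) (hxy : P.Adj x y)
    (hleft : ¬ P.HasChord (Iic x)) (hright : ¬ P.HasChord (Ioc b y))
    (hcross : ∀ u ≤ x, ∀ w ∈ Ioc b y, P.Adj u w → u = x ∧ w = y) : HasDecomposition G 1 := by
  have := h.add_one_lt
  refine h.hasDecomposition_of_Icc_union_Icc hG (by omega) hy.le hxy.right_le (fun _ => hx) ?_
  rw [← uIcc_of_le hy.le, ← uIcc_of_le (Nat.zero_le x)]
  refine isInducedCyclePacking_union h.adj_zero hxy (.inr (by omega)) ?_ ?_ ?_ ?_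
  · exact fun hc => hleft (hc.mono (uIcc_of_le (Nat.zero_le x) ▸ Icc_subset_Iic_self))
  · rw [uIcc_of_le hy.le]
    exact h.not_hasChord_Icc hG hright
  · rw [uIcc_of_le hy.le, uIcc_of_le (Nat.zero_le x), Set.disjoint_left]
    grind
  · rw [uIcc_of_le hy.le, uIcc_of_le (Nat.zero_le x)]
    rintro u ⟨-, hu⟩ w ⟨hbw, hw⟩ huw
    rcases hbw.eq_or_lt with rfl | hbw
    · exact .inl ⟨h.eq_zero_of_chord hG (huw.chord (by omega)), rfl⟩
    · exact .inr (hcross u hu w ⟨hbw, hw⟩ huw)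

theorem hasDecomposition_of_hasChord (hleft : P.HasChord (Iio c)) (hright : P.HasChord (Ioi b)) :
    HasDecomposition G 2 := by
  by_contra hGdec
  obtain ⟨x, y, hxy⟩ := h.split.exists_isBridge hG hGdec hleft hright
  refine hGdec ((h.hasDecomposition_of_corner hG hxy.lt_lo hxy.hi_lt hxy.adj (fun hc => ?_)
    (fun hc => ?_) fun u hu w hw huw => ?_).mono one_le_two)
  · obtain ⟨s, -, t, ht, hst, hc⟩ := hc.exists_lt
    exact (hxy.left hst (ht.trans_lt hxy.lt_lo) hc).2.not_ge ht
  · obtain ⟨s, hs, t, ht, hst, hc⟩ := hc.exists_lt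
    exact (hxy.right hs.1 hst hc).2.not_ge ht.2
  · exact hxy.unique (hu.trans_lt hxy.lt_lo) hw.1 huw

/-- The cycle runs through `0, …, c, n, …, b`. -/
theorem hasDecomposition_of_not_adj (hleft : ¬ P.HasChord (Iio c)) (hright : ¬ P.HasChord (Ioi b))
    (hcross : ∀ u < c, ∀ w, b < w → ¬ P.Adj u w) : HasDecomposition G 1 := by
  have := h.add_one_lt
  have hb := h.lt
  refine h.hasDecomposition_of_Icc_union_Icc hG h.add_one_lt h.lt.le le_rfl
    (fun h => absurd h (lt_irrefl n)) ?_
  rw [← uIcc_of_le h.lt.le, ← uIcc_of_le (Nat.zero_le c)]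
  refine isInducedCyclePacking_union h.adj_zero h.adj_last.symm (.inl h.pos.ne) ?_ ?_ ?_ ?_
  · rw [uIcc_of_le (Nat.zero_le c)]
    intro hc
    obtain ⟨s, hs, t, ht, hst, hst'⟩ := hc.exists_lt
    rcases ht.2.eq_or_lt with rfl | htc
    · have := h.eq_last_of_chord hG hst'.symm
      omega
    · exact hleft ⟨s, hst.trans htc, t, htc, hst'⟩
  · rw [uIcc_of_le h.lt.le]
    exact h.not_hasChord_Icc hG fun hc => hright (hc.mono Ioc_subset_Ioi_self)
  · rw [uIcc_of_le h.lt.le, uIcc_of_le (Nat.zero_le c), Set.disjoint_left]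
    grind
  · rw [uIcc_of_le h.lt.le, uIcc_of_le (Nat.zero_le c)]
    rintro u ⟨-, hu⟩ w ⟨hbw, hw⟩ huw
    have huw' : P.Chord u w := huw.chord (by omega)
    rcases hu.eq_or_lt with rfl | hu
    · exact .inr ⟨rfl, h.eq_last_of_chord hG huw'⟩
    rcases hbw.eq_or_lt with rfl | hbw
    · exact .inl ⟨h.eq_zero_of_chord hG huw', rfl⟩
    · exact absurd huw (hcross u hu w hbw)

theorem hasDecomposition_of_not_hasChord (hleft : ¬ P.HasChord (Iio c))
    (hright : ¬ P.HasChord (Ioi b)) : HasDecomposition G 1 := by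
  by_cases hcross : ∃ d x y, x + y = d ∧ x < c ∧ b < y ∧ P.Adj x y
  · classical
    obtain ⟨x, y, hd, hx, hy, hxy⟩ := Nat.find_spec hcross
    have hmin {u w} (hu : u < c) (hw : b < w) (huw : P.Adj u w) : x + y ≤ u + w :=
      hd ▸ Nat.find_min' hcross ⟨u, w, rfl, hu, hw, huw⟩
    refine h.hasDecomposition_of_corner hG hx hy hxy
      (fun hc => hleft (hc.mono fun r hr => lt_of_le_of_lt hr hx))
      (fun hc => hright (hc.mono Ioc_subset_Ioi_self)) fun u hu w hw huw => ?_
    have := hmin (hu.trans_lt hx) hw.1 huw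
    have := hw.2
    omega
  · push Not at hcross
    exact h.hasDecomposition_of_not_adj hG hleft hright fun u hu w hw => hcross _ u w rfl hu hw

theorem hasDecomposition_of_iff (hiff : P.HasChord (Iio c) ↔ P.HasChord (Ioi b)) :
    HasDecomposition G 2 := by
  by_cases hleft : P.HasChord (Iio c)
  · exact h.hasDecomposition_of_hasChord hG hleft (hiff.1 hleft)
  · exact (h.hasDecomposition_of_not_hasChord hG hleft (hiff.not.1 hleft)).mono one_le_two

theorem hasDecomposition_of_middle_iff (hiff : P.HasChord (Ioo c b) ↔ P.HasChord (Ioi b)) :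
    HasDecomposition G 2 :=
  h.rotate.hasDecomposition_of_iff hG <| by rwa [rotate_hasChord_Iio, rotate_hasChord_Ioi]

/-- Reversing and rotating the path permutes the three sides. -/
theorem hasDecomposition : HasDecomposition G 2 := by
  by_cases hlast : P.HasChord (Iio c) ↔ P.HasChord (Ioi b)
  · exact h.hasDecomposition_of_iff hG hlast
  by_cases hmiddle : P.HasChord (Ioo c b) ↔ P.HasChord (Ioi b)
  · exact h.hasDecomposition_of_middle_iff hG hmiddle
  have hIoo : (n - ·) ⁻¹' Ioo (n - b) (n - c) = Ioo c b := by
    have := h.lt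
    ext
    simp only [mem_preimage, mem_Ioo]
    omega
  have hIoi : (n - ·) ⁻¹' Ioi (n - c) = Iio c := by
    have := h.lt
    have := h.add_one_lt
    ext
    simp only [mem_preimage, mem_Ioi, mem_Iio]
    omega
  refine h.reverse.hasDecomposition_of_middle_iff hG ?_
  rw [reverse_hasChord, reverse_hasChord, hIoo, hIoi]
  tauto

end Theta

theorem hasDecomposition_of_crossing [G.LocallyFinite] (hG : G.IsRegularOfDegree 3)
    (h0 : P.Adj 0 b) (hn : P.Adj n c) (hcb : c < b) : HasDecomposition G 2 := by
  rcases Nat.eq_zero_or_pos c with rfl | hc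
  · exact (hasDecomposition_of_adj hG hn.symm).mono one_le_two
  rcases h0.right_le.eq_or_lt with rfl | hb
  · exact (hasDecomposition_of_adj hG h0).mono one_le_two
  rcases (Nat.succ_le_of_lt hcb).eq_or_lt with rfl | hcb
  · refine (hasDecomposition_of_adj (P := P.rotate h0) hG ?_).mono one_le_two
    rw [rotate_adj_of_lt_of_le h0 (by omega) hb.le]
    simpa using hn.symm
  · exact Theta.hasDecomposition hG ⟨h0, hn, hc, hcb, hb⟩

end Theta

section Barbell

/-- The chords at the two ends of the path, `0a`, `0b`, `nc` and `nd`, do not cross. -/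
structure Barbell (P : HamiltonianPath G n) (a b c d : ℕ) : Prop where
  zero_left : P.Chord 0 a
  zero_right : P.Chord 0 b
  last_left : P.Chord n c
  last_right : P.Chord n d
  left_lt : a < b
  lt : b < c
  right_lt : c < d

namespace Barbell

theorem split (h : P.Barbell a b c d) : P.Split b c :=
  ⟨⟨b, left_mem_Icc.2 h.lt.le, h.zero_right⟩, ⟨c, right_mem_Icc.2 h.lt.le, h.last_left⟩⟩

theorem one_lt (h : P.Barbell a b c d) : 1 < a := by
  have := h.zero_left.lt_or_lt
  omega

theorem add_one_lt (h : P.Barbell a b c d) : d + 1 < n := by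
  have := h.last_right.lt_or_lt
  have := h.last_right.adj.right_le
  omega

theorem zero_lt_of_isBridge (h : P.Barbell a b c d) (hxy : P.IsBridge b c x y) : 0 < x ∧ x < a :=
  hxy.left (by have := h.one_lt; omega) h.left_lt h.zero_left

theorem exists_isBridge [G.LocallyFinite] (hG : G.IsRegularOfDegree 3) (h : P.Barbell a b c d)
    (hGdec : ¬ HasDecomposition G 2) : ∃ x y, P.IsBridge b c x y := by
  have := h.add_one_lt
  have := h.left_lt
  have := h.right_lt
  exact h.split.exists_isBridge hG hGdec
    ⟨0, mem_Iio.2 (by omega), a, mem_Iio.2 h.left_lt, h.zero_left⟩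
    ⟨n, mem_Ioi.2 (by omega), d, mem_Ioi.2 h.right_lt, h.last_right⟩

theorem rotate_chord_zero (h : P.Barbell a b c d) : (P.rotate h.zero_left.adj).Chord 0 a := by
  have := h.one_lt
  have hpred := P.adj_add_one (s := a - 1) (by have := h.zero_left.adj.right_le; omega)
  rw [Nat.sub_add_cancel (by omega)] at hpred
  exact ((rotate_adj_of_lt_of_le _ (by omega) le_rfl).2 hpred).chord (.inl this)

theorem rotate_last (h : P.Barbell a b c d) :
    (P.rotate h.zero_left.adj).Chord n c ∧ (P.rotate h.zero_left.adj).Chord n d := by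
  have := h.left_lt
  have := h.lt
  have := h.right_lt
  have := h.add_one_lt
  exact ⟨(rotate_chord_of_le _ (by omega) (by omega)).2 h.last_left,
    (rotate_chord_of_le _ (by omega) (by omega)).2 h.last_right⟩

theorem rotate_of_lt (h : P.Barbell a b c d) (hz : P.Chord (a - 1) z) (hza : z < a) :
    (P.rotate h.zero_left.adj).Barbell (a - 1 - z) a c d := by
  refine ⟨(rotate_chord_of_lt _ (by omega) (by omega)).2 ?_, h.rotate_chord_zero, h.rotate_last.1,
    h.rotate_last.2, by omega, h.left_lt.trans h.lt, h.right_lt⟩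
  rwa [Nat.sub_zero, Nat.sub_sub_self (by omega)]

theorem rotate_of_mem_Ioo (h : P.Barbell a b c d) (hz : P.Chord (a - 1) z) (hzbc : z ∈ Ioo b c) :
    (P.rotate h.zero_left.adj).Barbell a z c d := by
  have := h.one_lt
  have haz := h.left_lt.trans hzbc.1
  exact ⟨h.rotate_chord_zero,
    ((rotate_adj_of_lt_of_le _ (by omega) haz.le).2 hz.adj).chord (.inl (by omega)),
    h.rotate_last.1, h.rotate_last.2, haz, hzbc.2, h.right_lt⟩

variable [G.LocallyFinite] (hG : G.IsRegularOfDegree 3) (h : P.Barbell a b c d)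

include hG h

theorem lt_or_mem_Ioo_of_chord (hxy : P.IsBridge b c x y) (hu : u ∈ Ioo x a) (hut : P.Chord u t) :
    t ∈ Ioo 0 x ∨ t ∈ Ioo b c := by
  obtain ⟨hxu, hua⟩ := hu
  have hab := h.left_lt
  have hbc := h.lt
  have := h.right_lt
  have := h.add_one_lt
  have htu := hut.adj.ne
  have ht0 : t ≠ 0 := by
    rintro rfl
    have := h.zero_left.eq_or_eq hG h.zero_right hab.ne hut.symm
    omega
  have htb : t ≠ b := by
    rintro rfl
    have := h.zero_right.symm.eq hG (by omega) (by omega) hut.symm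
    omega
  have htc : t ≠ c := by
    rintro rfl
    have := h.last_left.symm.eq hG (by omega) (by omega) hut.symm
    omega
  have hleft : t < b → t < x := fun htb => by
    rcases htu.lt_or_gt with h | h
    · exact absurd (hxy.left h htb hut).1 hxu.not_gt
    · exact (hxy.left h (hua.trans hab) hut.symm).1
  have hright : ¬ c < t := fun hct => hxu.ne' (hxy.unique (hua.trans hab) hct hut.adj).1
  simp only [mem_Ioo]
  omega

theorem not_chord_pred (hGdec : ¬ HasDecomposition G 2) (hz : z ∈ Ioo b c) :
    ¬ P.Chord (a - 1) z := fun hc => by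
  have := h.one_lt
  have hab := h.left_lt
  have h' := h.rotate_of_mem_Ioo hc hz
  obtain ⟨x, y, hxy⟩ := h'.exists_isBridge hG hGdec
  have h0b : (P.rotate h.zero_left.adj).Adj (a - 1) b :=
    (rotate_adj_of_lt_of_le _ (by omega) hab.le).2 (by simpa using h.zero_right.adj)
  have := (hxy.left (by omega) hz.1 (h0b.chord (.inl (by omega)))).1
  have := (h'.zero_lt_of_isBridge hxy).2
  omega

theorem hasDecomposition_of_isBridge_pred (hxy : P.IsBridge b c (a - 1) y) :
    HasDecomposition G 2 := by
  have := h.left_lt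
  have := h.lt
  have := h.one_lt
  have := hxy.hi_lt
  have := h.right_lt
  have := h.add_one_lt
  refine hasDecomposition_of_crossing (P := P.rotate h.zero_left.adj) hG
    ((rotate_adj_of_lt_of_le _ (by omega) (by omega)).2 ?_)
    ((rotate_adj_of_le _ (by omega) (by omega)).2 h.last_left.adj) hxy.hi_lt
  rw [Nat.sub_zero]
  exact hxy.adj

theorem exists_chord_mem_Ioo (hxy : P.IsBridge b c x y) (hxa : x ≤ a - 1 - x) :
    ∃ u ∈ Ioo x a, ∃ w ∈ Ioo b c, P.Chord u w := by
  by_contra! hnot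
  have hbounds : 0 < x ∧ x < a ∧ a < n := by
    have := h.zero_lt_of_isBridge hxy
    have := h.left_lt
    have := h.lt
    have := h.right_lt
    have := h.add_one_lt
    omega
  have hpartner : ∀ u ∈ Finset.Ioo x a, ∃ t ∈ Finset.Ioo 0 x, P.Chord u t := fun u hu => by
    rw [Finset.mem_Ioo] at hu
    obtain ⟨t, hut⟩ := P.exists_chord hG (s := u) (by omega) (by omega)
    refine ⟨t, ?_, hut⟩
    rcases h.lt_or_mem_Ioo_of_chord hG hxy hu hut with ht | ht
    · exact Finset.mem_Ioo.2 ht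
    · exact absurd hut (hnot u hu t ht)
  choose! f hf hchord using hpartner
  obtain ⟨u, hu, u', hu', hne, heq⟩ := Finset.exists_ne_map_eq_of_card_lt_of_maps_to
    (s := Finset.Ioo x a) (t := Finset.Ioo 0 x) (by simp only [Nat.card_Ioo]; omega) hf
  have := Finset.mem_Ioo.1 (hf u hu)
  exact hne ((hchord u hu).symm.eq hG (by omega) (by omega) (heq ▸ (hchord u' hu').symm))

/-- The cycle runs through `0, …, z, a - 1, a`. -/
theorem isInducedCyclePacking (hxy : P.IsBridge b c x y) (hxa : x < a - 1) (hzx : z < x)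
    (hz : P.Chord (a - 1) z) : IsInducedCyclePacking G 1 (P.vert '' (Icc 0 z ∪ Icc (a - 1) a)) := by
  have := h.left_lt
  have := h.lt
  have := h.right_lt
  have := h.add_one_lt
  rw [← uIcc_of_le (Nat.zero_le z), ← uIcc_of_ge (Nat.sub_le a 1)]
  refine isInducedCyclePacking_union h.zero_left.adj hz.adj.symm (.inr (by omega)) ?_ ?_ ?_ ?_
  · rw [uIcc_of_le (Nat.zero_le z)]
    intro hc
    obtain ⟨s, -, t, ⟨-, htz⟩, hst, hc⟩ := hc.exists_lt
    have := (hxy.left hst (by omega) hc).2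
    omega
  · rw [uIcc_of_ge (Nat.sub_le a 1)]
    rintro ⟨s, hs, t, ht, hc⟩
    have := hc.lt_or_lt
    grind
  · rw [uIcc_of_le (Nat.zero_le z), uIcc_of_ge (Nat.sub_le a 1), Set.disjoint_left]
    grind
  · rw [uIcc_of_le (Nat.zero_le z), uIcc_of_ge (Nat.sub_le a 1)]
    rintro u ⟨-, hu⟩ w ⟨hw, hw'⟩ huw
    have huw' : P.Chord u w := huw.chord (by omega)
    obtain rfl | rfl : w = a ∨ w = a - 1 := by omega
    · exact .inl ⟨huw'.symm.eq hG (by omega) (by omega) h.zero_left.symm, rfl⟩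
    · exact .inr ⟨huw'.symm.eq hG (by omega) (by omega) hz, rfl⟩

theorem hasDecomposition_of_chord (hxy : P.IsBridge b c x y) (hzx : z < x)
    (hz : P.Chord (a - 1) z) (hu : u ∈ Ioo x a) (hw : w ∈ Ioo b c) (huw : P.Chord u w) :
    HasDecomposition G 2 := by
  have := h.one_lt
  have := h.left_lt
  have := h.lt
  have := h.right_lt
  have := h.add_one_lt
  obtain ⟨hxu, hua⟩ := hu
  obtain ⟨hbw, hwc⟩ := hw
  have hua' : u ≠ a - 1 := by
    rintro rfl
    have := hz.eq hG (by omega) (by omega) huw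
    omega
  obtain ⟨k, l, hdk, hln, hkl⟩ := h.last_right.symm.exists_isMinChord (by omega)
  have hkl' := hkl.1
  refine hasDecomposition_of_intervals hG (p := z + 1) (i := a - 1) (j := a + 1) (k := k)
    (l := l + 1) (by omega) (by omega) (by omega) (by omega) (by omega)
    (fun _ => ⟨⟨by omega, by omega⟩, ⟨by omega, by omega⟩, huw.adj, by omega⟩)
    (fun _ => ⟨⟨by omega, by omega⟩, h.last_left.adj⟩) ?_
  have hD : Iio (z + 1) ∪ Ico (a - 1) (a + 1) ∪ Ico k (l + 1) =
      (Icc 0 z ∪ Icc (a - 1) a) ∪ Icc k l := by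
    ext
    simp only [mem_union, mem_Iio, mem_Ico, mem_Icc]
    omega
  have hle : ∀ r ∈ Icc 0 z ∪ Icc (a - 1) a, r < b ∧ r ≠ x := by
    rintro r (⟨-, hr⟩ | ⟨hr, hr'⟩) <;> omega
  rw [hD, image_union]
  refine (h.isInducedCyclePacking hG hxy (by omega) hzx hz).union hkl.isInducedCyclePacking ?_ ?_
  · rw [Set.disjoint_left]
    rintro _ ⟨r, hr, rfl⟩ hr'
    have := hle r hr
    have := ((P.vert_mem_image_iff (fun r hr => hr.2.trans hln) (by omega)).1 hr').1
    omega
  · rintro _ ⟨r, hr, rfl⟩ _ ⟨q, hq, rfl⟩ hrq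
    obtain ⟨hrb, hrx⟩ := hle r hr
    exact hrx (hxy.unique hrb (by have := hq.1; omega) ⟨by omega, hq.2.trans hln, hrq⟩).1

/-- Induction on `x`, which reversing the segment `[0, a)` replaces by `a - 1 - x`. -/
theorem hasDecomposition_of_isBridge (hxy : P.IsBridge b c x y) : HasDecomposition G 2 := by
  by_contra hGdec
  induction hd : x using Nat.strong_induction_on generalizing P a b x y with
  | _ d' ih =>
    subst hd
    have hxa := (h.zero_lt_of_isBridge hxy).2
    have hab := h.left_lt
    have := h.lt
    have := h.right_lt
    have := h.add_one_lt
    rcases (Nat.le_sub_one_of_lt hxa).eq_or_lt with rfl | hxa'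
    · exact hGdec (h.hasDecomposition_of_isBridge_pred hG hxy)
    obtain ⟨z, hz⟩ := P.exists_chord hG (s := a - 1) (by omega) (by omega)
    have hzx : z ∈ Ioo 0 x := (h.lt_or_mem_Ioo_of_chord hG hxy ⟨hxa', by omega⟩ hz).resolve_right
      fun hz' => h.not_chord_pred hG hGdec hz' hz
    rcases le_or_gt x (a - 1 - x) with hle | hlt
    · obtain ⟨u, hu, w, hw, huw⟩ := h.exists_chord_mem_Ioo hG hxy hle
      exact hGdec (h.hasDecomposition_of_chord hG hxy hzx.2 hz hu hw huw)
    · have h' := h.rotate_of_lt hz (hzx.2.trans hxa)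
      obtain ⟨x', y', hxy'⟩ := h'.exists_isBridge hG hGdec
      have hadj : (P.rotate h.zero_left.adj).Adj (a - 1 - x) y := by
        refine (rotate_adj_of_lt_of_le _ (by omega) (by have := hxy.hi_lt; omega)).2 ?_
        rw [Nat.sub_sub_self (by omega)]
        exact hxy.adj
      obtain ⟨hx', -⟩ := hxy'.unique (by omega) hxy.hi_lt hadj
      exact ih x' (hx' ▸ hlt) h' hxy' rfl

theorem hasDecomposition : HasDecomposition G 2 := by
  by_contra hGdec
  obtain ⟨x, y, hxy⟩ := h.exists_isBridge hG hGdec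
  exact hGdec (h.hasDecomposition_of_isBridge hG hxy)

end Barbell

end Barbell

theorem hasDecomposition [G.LocallyFinite] (hG : G.IsRegularOfDegree 3)
    (P : HamiltonianPath G n) : HasDecomposition G 2 := by
  obtain ⟨a, b, hab, ha, hb⟩ := P.exists_chord_lt hG (.inl rfl)
  obtain ⟨c, d, hcd, hc, hd⟩ := P.exists_chord_lt hG (.inr rfl)
  rcases lt_trichotomy b c with hbc | rfl | hcb
  · exact Barbell.hasDecomposition hG ⟨ha, hb, hc, hd, hab, hbc, hcd⟩
  · have := hb.lt_or_lt
    have := hc.lt_or_lt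
    have := hb.adj.right_le
    have := hb.symm.eq hG (by omega) (by omega) hc.symm
    omega
  · exact hasDecomposition_of_crossing hG hb.adj hc.adj hcb

end HamiltonianPath

end HoffmannOstenhof

/-- Strengthened form for traceable cubic graphs: if `G` is a connected cubic
graph containing a Hamiltonian path, then the edge set of `G` can be
partitioned into the edge set of a spanning tree of `G`, the edge set of a
matching, and the edge set of a disjoint union of at most two cycles. -/
theorem hoffmann_ostenhof_traceable_two_cycles
    {V : Type*} [Fintype V] [DecidableEq V] (G : SimpleGraph V) [DecidableRel G.Adj]
    (hcubic : ∀ v : V, G.degree v = 3)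
    (hconn : G.Connected)
    (htrace : ∃ (u v : V) (p : G.Walk u v), p.IsPath ∧ p.IsHamiltonian) :
    ∃ (T M C : Set (Sym2 V)),
      -- the three parts partition the edge set of `G`
      T ∪ M ∪ C = G.edgeSet ∧
      Disjoint T M ∧ Disjoint T C ∧ Disjoint M C ∧
      -- `T` is the edge set of a spanning tree of `G`
      (SimpleGraph.fromEdgeSet T).IsTree ∧
      -- `M` is a matching: distinct edges of `M` share no vertex
      M.Pairwise (fun e f => ∀ v : V, v ∈ e → v ∉ f) ∧
      -- `C` is the edge set of a family of at most two vertex-disjoint cycles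
      (∃ (ι : Type) (hι : Fintype ι) (x : ι → V)
          (w : ∀ i : ι, G.Walk (x i) (x i)),
        @Fintype.card ι hι ≤ 2 ∧
        (∀ i, (w i).IsCycle) ∧
        (Pairwise fun i j => ∀ v : V, v ∈ (w i).support → v ∉ (w j).support) ∧
        C = ⋃ i, {e : Sym2 V | e ∈ (w i).edges}) := by
  obtain ⟨u, v, p, hp, hham⟩ := htrace
  exact HoffmannOstenhof.HamiltonianPath.hasDecomposition hcubic (.ofWalk p hp hham.mem_support)
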